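/- Let λ > 0, 0 < σ < 1 and 0 < α < 1 satisfy α + 2σ < min{λ, 1}. Then there exists a constant C = C(λ, σ, α) > 0 such that for every f ∈ C^α_+, the function u(x) := (1/Γ(2σ)) ∫₀^∞ P_t^λ f(x) t^{2σ−1} dt is well defined for every x > 0 (all the integrals involved converge absolutely), u belongs to C^{α+2σ}_+, and ‖u‖_{C^{α+2σ}_+} ≤ C ‖f‖_{C^α_+}. -/

import Mathlib

open Real MeasureTheory Set Filter

noncomputable section

/-- The modified Bessel function of the first kind `I_ν(z)`. -/
def besselI (ν z : ℝ) : ℝ :=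
  ∑' k : ℕ, (z / 2) ^ (2 * (k : ℝ) + ν) / ((Nat.factorial k : ℝ) * Real.Gamma ((k : ℝ) + ν + 1))

/-- The Bessel heat kernel `W_t^λ(x,y)`. -/
def besselHeatKernel (lam t x y : ℝ) : ℝ :=
  Real.sqrt (x * y) / (2 * t) * besselI (lam - 1 / 2) (x * y / (2 * t)) *
    Real.exp (-(x ^ 2 + y ^ 2) / (4 * t))

/-- The Bessel–Poisson kernel `P_t^λ(x,y)`, obtained by subordination. -/
def besselPoissonKernel (lam t x y : ℝ) : ℝ :=
  t / (2 * Real.sqrt Real.pi) *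
    ∫ s in Set.Ioi (0 : ℝ),
      s ^ (-(3 : ℝ) / 2) * Real.exp (-t ^ 2 / (4 * s)) * besselHeatKernel lam s x y

/-- The Bessel heat semigroup `W_t^λ u (x)`. -/
def heatSemigroup (lam : ℝ) (u : ℝ → ℝ) (t x : ℝ) : ℝ :=
  ∫ y in Set.Ioi (0 : ℝ), besselHeatKernel lam t x y * u y

/-- The Bessel–Poisson semigroup `P_t^λ f (x)`. -/
def poissonSemigroup (lam : ℝ) (f : ℝ → ℝ) (t x : ℝ) : ℝ :=
  ∫ y in Set.Ioi (0 : ℝ), besselPoissonKernel lam t x y * f y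

/-- The set of Hölder quotients of `f` on `(0,∞)`. -/
def holderRatioSet (α : ℝ) (f : ℝ → ℝ) : Set ℝ :=
  {r | ∃ x y : ℝ, 0 < x ∧ 0 < y ∧ x ≠ y ∧ r = |f x - f y| / |x - y| ^ α}

/-- The set of growth quotients `|f x|/x^α` of `f` on `(0,∞)`. -/
def growthRatioSet (α : ℝ) (f : ℝ → ℝ) : Set ℝ :=
  {r | ∃ x : ℝ, 0 < x ∧ r = |f x| / x ^ α}

/-- Membership in the Hölder space `C^α_+` (equal to `Lip_+` when `α = 1`). -/
def MemHolderPlus (α : ℝ) (f : ℝ → ℝ) : Prop :=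
  ContinuousOn f (Set.Ioi 0) ∧ BddAbove (holderRatioSet α f) ∧ BddAbove (growthRatioSet α f)

/-- The `C^α_+` norm. -/
def holderPlusNorm (α : ℝ) (f : ℝ → ℝ) : ℝ :=
  sSup (holderRatioSet α f) + sSup (growthRatioSet α f)

/-- `Γ(-σ)`, written through the functional equation `Γ(-σ) = Γ(2-σ)/((-σ)(1-σ))`. -/
def gammaNeg (σ : ℝ) : ℝ := Real.Gamma (2 - σ) / (-σ * (1 - σ))

/-- The kernel `K_σ^λ(x,y)`. -/
def fracKernelK (lam σ x y : ℝ) : ℝ :=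
  1 / (-gammaNeg σ) * ∫ t in Set.Ioi (0 : ℝ), besselHeatKernel lam t x y * t ^ (-1 - σ)

/-- `W_t^λ 1 (x)`. -/
def heatOne (lam t x : ℝ) : ℝ := ∫ y in Set.Ioi (0 : ℝ), besselHeatKernel lam t x y

/-- The function `B_σ^λ(x)`. -/
def fracFunB (lam σ x : ℝ) : ℝ :=
  1 / gammaNeg σ * ∫ t in Set.Ioi (0 : ℝ), (heatOne lam t x - 1) * t ^ (-1 - σ)

/-- The integer `m` with `m - 1 ≤ β < m`. -/
def fracOrder (β : ℝ) : ℕ := Nat.floor β + 1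

/-- The Segovia–Wheeden fractional derivative `∂_t^β F(t)`, a complex number. -/
def fracDeriv (β : ℝ) (F : ℝ → ℝ) (t : ℝ) : ℂ :=
  Complex.exp (-(Real.pi * ((fracOrder β : ℝ) - β)) * Complex.I) /
      Complex.ofReal (Real.Gamma ((fracOrder β : ℝ) - β)) *
    Complex.ofReal
      (∫ s in Set.Ioi (0 : ℝ),
        iteratedDeriv (fracOrder β) F (t + s) * s ^ ((fracOrder β : ℝ) - β - 1))

/-!
Poisson's integral for `I_ν` turns the Bessel heat kernel into an average of Gaussians over a
symmetric Beta distribution. Integrating in the subordination variable and then against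
`t ^ (s - 1) dt`, with `s = 2σ`, gives `u = κ ∫ K(·, y) f(y) dy` for
`K(x, y) = (x y) ^ λ ∫ |x - y e^{iθ}| ^ (s - 1 - 2λ) (sin θ) ^ (2λ - 1) dθ`. This kernel is
homogeneous of degree `s - 1`, has the size and regularity of `|x - y| ^ (s - 1)` near the diagonal
and decays like `y ^ (s - 1 - λ)`, which makes `K(x, y) y ^ α` integrable when `α + s < λ`.

For the Hölder estimate at `x₂ < x₁ < 2 x₂`, subtract `f(x₁)` from `f` and split at distance
`2 (x₁ - x₂)` from `x₁`. Subtracting the constant costs `f(x₁) ∫ (K(x₁, y) - K(x₂, y)) dy`, which by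
homogeneity is a multiple of `f(x₁) (x₁ ^ s - x₂ ^ s)` and is controlled by `|f(x₁)| ≤ N x₁ ^ α`.
When `x₁ ≥ 2 x₂`, the growth bound `|u(x)| ≤ C N x ^ (α + s)` suffices.
-/

open ProbabilityTheory Topology Metric

section BetaMeasure

variable {a b : ℝ}

theorem toReal_betaPDF_mul (ha : 0 < a) (hb : 0 < b) (g : ℝ → ℝ) (w : ℝ) :
    (betaPDF a b w).toReal * g w =
      (Ioo 0 1).indicator (fun w => 1 / beta a b * w ^ (a - 1) * (1 - w) ^ (b - 1) * g w) w := by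
  by_cases hw : w ∈ Ioo (0 : ℝ) 1
  · rw [indicator_of_mem hw, betaPDF, ENNReal.toReal_ofReal (betaPDFReal_pos hw.1 hw.2 ha hb).le,
      betaPDFReal, if_pos ⟨hw.1, hw.2⟩]
  · rw [indicator_of_notMem hw, betaPDF, betaPDFReal, if_neg (show ¬(0 < w ∧ w < 1) from hw)]
    simp

theorem measurable_betaPDF (a b : ℝ) : Measurable (betaPDF a b) :=
  (measurable_betaPDFReal a b).ennreal_ofReal

theorem integral_betaMeasure (ha : 0 < a) (hb : 0 < b) (g : ℝ → ℝ) :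
    ∫ w, g w ∂betaMeasure a b =
      ∫ w in Ioo (0 : ℝ) 1, 1 / beta a b * w ^ (a - 1) * (1 - w) ^ (b - 1) * g w := by
  rw [betaMeasure, integral_withDensity_eq_integral_toReal_smul (measurable_betaPDF a b)
    (by simp [betaPDF]), ← integral_indicator measurableSet_Ioo]
  exact integral_congr_ae (Eventually.of_forall (toReal_betaPDF_mul ha hb g))

theorem integrable_betaMeasure_iff (ha : 0 < a) (hb : 0 < b) {g : ℝ → ℝ} :
    Integrable g (betaMeasure a b) ↔
      IntegrableOn (fun w => 1 / beta a b * w ^ (a - 1) * (1 - w) ^ (b - 1) * g w) (Ioo 0 1) := by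
  rw [betaMeasure, integrable_withDensity_iff_integrable_smul' (measurable_betaPDF a b)
    (by simp [betaPDF]), ← integrable_indicator_iff measurableSet_Ioo]
  exact integrable_congr (Eventually.of_forall (toReal_betaPDF_mul ha hb g))

theorem ae_mem_Ioo_betaMeasure (a b : ℝ) : ∀ᵐ w ∂betaMeasure a b, w ∈ Ioo (0 : ℝ) 1 := by
  rw [betaMeasure, ae_withDensity_iff (measurable_betaPDF a b)]
  refine Eventually.of_forall fun w hw => ?_
  by_contra h
  exact hw (by rw [betaPDF, betaPDFReal, if_neg (show ¬(0 < w ∧ w < 1) from h),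
    ENNReal.ofReal_zero])

theorem integrable_betaMeasure_of_continuousOn (ha : 0 < a) (hb : 0 < b) {g : ℝ → ℝ}
    (hg : ContinuousOn g (Icc 0 1)) : Integrable g (betaMeasure a b) := by
  have := isProbabilityMeasureBeta ha hb
  rw [← Measure.restrict_eq_self_of_ae_mem
    ((ae_mem_Ioo_betaMeasure a b).mono fun _ h => Ioo_subset_Icc_self h)]
  exact hg.integrableOn_compact isCompact_Icc

theorem hasDerivAt_rpow_mul_one_sub_rpow_mul {f : ℝ → ℝ} {f' w : ℝ} (hw : w ∈ Ioo (0 : ℝ) 1)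
    (hf : HasDerivAt f f' w) :
    HasDerivAt (fun w => w ^ a * (1 - w) ^ b * f w)
      (w ^ (a - 1) * (1 - w) ^ (b - 1) * ((a * (1 - w) - b * w) * f w + w * (1 - w) * f')) w := by
  have h0w : w ≠ 0 := hw.1.ne'
  have h1w : 1 - w ≠ 0 := (sub_pos.2 hw.2).ne'
  have hleft := hasDerivAt_rpow_const (p := a) (Or.inl h0w)
  have hright := ((hasDerivAt_id w).const_sub 1).rpow_const (p := b) (Or.inl h1w)
  refine ((hleft.fun_mul hright).fun_mul hf).congr_deriv ?_
  rw [id_eq, rpow_sub_one h0w, rpow_sub_one h1w]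
  field_simp
  ring

/-- Integration by parts against `w ^ a * (1 - w) ^ b`, which vanishes at both endpoints. -/
theorem integral_stein_betaMeasure (ha : 0 < a) (hb : 0 < b) {f f' : ℝ → ℝ}
    (hf : ∀ w, HasDerivAt f (f' w) w) (hf' : Continuous f') :
    ∫ w, ((a * (1 - w) - b * w) * f w + w * (1 - w) * f' w) ∂betaMeasure a b = 0 := by
  have hfc : Continuous f := continuous_iff_continuousAt.2 fun w => (hf w).continuousAt
  set G : ℝ → ℝ := fun w => (a * (1 - w) - b * w) * f w + w * (1 - w) * f' w
  have hG : IntegrableOn (fun w => 1 / beta a b * w ^ (a - 1) * (1 - w) ^ (b - 1) * G w)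
      (Ioo 0 1) :=
    (integrable_betaMeasure_iff ha hb).1
      (integrable_betaMeasure_of_continuousOn ha hb (by fun_prop : Continuous G).continuousOn)
  have hderiv : ∀ w ∈ Ioo (0 : ℝ) 1, HasDerivAt
      (fun w => 1 / beta a b * (w ^ a * (1 - w) ^ b * f w))
      (1 / beta a b * w ^ (a - 1) * (1 - w) ^ (b - 1) * G w) w := fun w hw => by
    simpa only [mul_assoc, G] using
      (hasDerivAt_rpow_mul_one_sub_rpow_mul (a := a) (b := b) hw (hf w)).const_mul (1 / beta a b)
  have hcont : ContinuousOn (fun w => 1 / beta a b * (w ^ a * (1 - w) ^ b * f w)) (Icc 0 1) :=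
    (continuous_const.mul
      (((continuous_id.rpow_const fun _ => Or.inr ha.le).mul
        ((continuous_const.sub continuous_id).rpow_const fun _ => Or.inr hb.le)).mul
          hfc)).continuousOn
  rw [integral_betaMeasure ha hb, ← integral_Ioc_eq_integral_Ioo,
    ← intervalIntegral.integral_of_le zero_le_one,
    intervalIntegral.integral_eq_sub_of_hasDerivAt_of_le zero_le_one hcont hderiv
      ((intervalIntegrable_iff_integrableOn_Ioo_of_le zero_le_one).2 hG)]
  simp [zero_rpow ha.ne', zero_rpow hb.ne']

variable {lam : ℝ}

theorem integral_one_sub_two_mul_pow_succ_succ_betaMeasure (hlam : 0 < lam) (n : ℕ) :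
    ∫ w, (1 - 2 * w) ^ (n + 2) ∂betaMeasure lam lam =
      (n + 1) / (2 * lam + n + 1) * ∫ w, (1 - 2 * w) ^ n ∂betaMeasure lam lam := by
  have hint (m : ℕ) : Integrable (fun w : ℝ => (1 - 2 * w) ^ m) (betaMeasure lam lam) :=
    integrable_betaMeasure_of_continuousOn hlam hlam (by fun_prop)
  have hderiv (w : ℝ) : HasDerivAt (fun w : ℝ => (1 - 2 * w) ^ (n + 1))
      ((n + 1) * (1 - 2 * w) ^ n * -2) w := by
    simpa using ((hasDerivAt_id w).const_mul 2 |>.const_sub 1).fun_pow (n + 1)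
  have hstein := integral_stein_betaMeasure hlam hlam hderiv (by fun_prop)
  -- `4 * w * (1 - w) = 1 - (1 - 2 * w) ^ 2`
  have hrw : ∀ w : ℝ, (lam * (1 - w) - lam * w) * (1 - 2 * w) ^ (n + 1) +
      w * (1 - w) * ((n + 1) * (1 - 2 * w) ^ n * -2) =
      (lam + (n + 1) / 2) * (1 - 2 * w) ^ (n + 2) - (n + 1) / 2 * (1 - 2 * w) ^ n := fun w => by
    ring
  simp only [hrw] at hstein
  rw [integral_sub ((hint _).const_mul _) ((hint _).const_mul _), integral_const_mul,
    integral_const_mul] at hstein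
  rw [div_mul_eq_mul_div, eq_div_iff (by positivity)]
  linarith

theorem integral_one_sub_two_mul_pow_odd_betaMeasure (hlam : 0 < lam) (k : ℕ) :
    ∫ w, (1 - 2 * w) ^ (2 * k + 1) ∂betaMeasure lam lam = 0 := by
  induction k with
  | zero =>
    have hstein := integral_stein_betaMeasure hlam hlam (f := fun _ => 1)
      (fun w => hasDerivAt_const w 1) continuous_const
    have hrw : ∀ w : ℝ, (lam * (1 - w) - lam * w) * 1 + w * (1 - w) * 0 = lam * (1 - 2 * w) :=
      fun w => by ring
    simp only [hrw, integral_const_mul, mul_eq_zero, hlam.ne', false_or] at hstein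
    simpa using hstein
  | succ k ih =>
    rw [show 2 * (k + 1) + 1 = 2 * k + 1 + 2 by ring,
      integral_one_sub_two_mul_pow_succ_succ_betaMeasure hlam, ih, mul_zero]

theorem integral_one_sub_two_mul_pow_even_betaMeasure (hlam : 0 < lam) (k : ℕ) :
    ∫ w, (1 - 2 * w) ^ (2 * k) ∂betaMeasure lam lam =
      Gamma (lam + 1 / 2) * (2 * k).factorial /
        (4 ^ k * k.factorial * Gamma (k + (lam - 1 / 2) + 1)) := by
  have := isProbabilityMeasureBeta hlam hlam
  have hΓ (j : ℕ) : Gamma (j + (lam - 1 / 2) + 1) ≠ 0 :=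
    (Gamma_pos_of_pos (by have := j.cast_nonneg (α := ℝ); linarith)).ne'
  induction k with
  | zero =>
    have h0 := hΓ 0
    rw [show ((0 : ℕ) : ℝ) + (lam - 1 / 2) + 1 = lam + 1 / 2 by push_cast; ring] at *
    simp [-one_div, h0]
  | succ k ih =>
    have hk : (k : ℝ) + (lam - 1 / 2) + 1 ≠ 0 := by
      have := k.cast_nonneg (α := ℝ); linarith
    have hstep : Gamma ((k + 1 : ℕ) + (lam - 1 / 2) + 1) =
        (k + (lam - 1 / 2) + 1) * Gamma (k + (lam - 1 / 2) + 1) := by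
      rw [← Gamma_add_one hk]; push_cast; ring_nf
    have hden : 2 * lam + (2 * k : ℕ) + 1 = 2 * (k + (lam - 1 / 2) + 1) := by push_cast; ring
    rw [show 2 * (k + 1) = 2 * k + 2 by ring,
      integral_one_sub_two_mul_pow_succ_succ_betaMeasure hlam, ih, hstep, hden,
      Nat.factorial_succ, Nat.factorial_succ, Nat.factorial_succ]
    have := hΓ k
    push_cast
    field_simp
    ring

end BetaMeasure

section BesselFunction

variable {lam : ℝ}

theorem hasSum_integral_exp_betaMeasure (hlam : 0 < lam) (z : ℝ) :
    HasSum (fun n : ℕ => z ^ n / n.factorial * ∫ w, (1 - 2 * w) ^ n ∂betaMeasure lam lam)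
      (∫ w, exp (z * (1 - 2 * w)) ∂betaMeasure lam lam) := by
  have := isProbabilityMeasureBeta hlam hlam
  have hexp (w : ℝ) : HasSum (fun n : ℕ => z ^ n / n.factorial * (1 - 2 * w) ^ n)
      (exp (z * (1 - 2 * w))) := by
    have h := NormedSpace.expSeries_div_hasSum_exp (z * (1 - 2 * w))
    simpa only [← Real.exp_eq_exp_ℝ, mul_pow, mul_div_right_comm] using h
  have hbound (n : ℕ) : ∀ᵐ w ∂betaMeasure lam lam,
      ‖z ^ n / n.factorial * (1 - 2 * w) ^ n‖ ≤ |z| ^ n / n.factorial := by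
    filter_upwards [ae_mem_Ioo_betaMeasure lam lam] with w hw
    rw [norm_mul, norm_pow, norm_div, norm_pow, Real.norm_natCast, norm_eq_abs, norm_eq_abs]
    exact mul_le_of_le_one_right (by positivity)
      (pow_le_one₀ (abs_nonneg _) (abs_le.2 ⟨by linarith [hw.2], by linarith [hw.1]⟩))
  simpa only [integral_const_mul] using hasSum_integral_of_dominated_convergence
    (F := fun (n : ℕ) (w : ℝ) => z ^ n / n.factorial * (1 - 2 * w) ^ n)
    (fun n _ => |z| ^ n / n.factorial) (fun n => by fun_prop)
    hbound (Eventually.of_forall fun _ => Real.summable_pow_div_factorial |z|)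
    (integrable_const _) (Eventually.of_forall hexp)

/-- Poisson's integral `∫ exp (z cos θ) (sin θ) ^ (2λ - 1) dθ`, with `w = sin² (θ / 2)`. -/
theorem besselI_eq_integral_exp (hlam : 0 < lam) {z : ℝ} (hz : 0 < z) :
    besselI (lam - 1 / 2) z = (z / 2) ^ (lam - 1 / 2) / Gamma (lam + 1 / 2) *
      ∫ w, exp (z * (1 - 2 * w)) ∂betaMeasure lam lam := by
  have hodd : ∀ n ∉ range fun k : ℕ => 2 * k,
      z ^ n / n.factorial * ∫ w, (1 - 2 * w) ^ n ∂betaMeasure lam lam = 0 := fun n hn => by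
    obtain ⟨k, rfl | rfl⟩ := Nat.even_or_odd' n
    · exact (hn ⟨k, rfl⟩).elim
    · rw [integral_one_sub_two_mul_pow_odd_betaMeasure hlam, mul_zero]
  have heven := (Function.Injective.hasSum_iff (mul_right_injective₀ two_ne_zero) hodd).2
    (hasSum_integral_exp_betaMeasure hlam z)
  rw [← heven.tsum_eq, ← tsum_mul_left, besselI]
  congr 1 with k
  rw [Function.comp_apply, integral_one_sub_two_mul_pow_even_betaMeasure hlam,
    rpow_add (by positivity), show 2 * (k : ℝ) = ((2 * k : ℕ) : ℝ) by push_cast; ring,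
    rpow_natCast, div_pow, pow_mul (2 : ℝ), show (2 : ℝ) ^ 2 = 4 by norm_num]
  field_simp

end BesselFunction

section KernelFubini

variable {X Y : Type*} [MeasurableSpace X] [MeasurableSpace Y] {μ : Measure X} {ν : Measure Y}
  [SFinite μ] [SFinite ν] {F : X → Y → ℝ} {k f : Y → ℝ}

theorem integrable_prod_mul_of_integral_eq
    (hF : AEStronglyMeasurable (fun p : X × Y => F p.1 p.2) (μ.prod ν))
    (hnonneg : ∀ᵐ y ∂ν, ∀ᵐ t ∂μ, 0 ≤ F t y) (hint : ∀ᵐ y ∂ν, Integrable (fun t => F t y) μ)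
    (heq : ∀ᵐ y ∂ν, ∫ t, F t y ∂μ = k y) (hf : AEStronglyMeasurable f ν)
    (hkf : Integrable (fun y => k y * f y) ν) :
    Integrable (fun p : X × Y => F p.1 p.2 * f p.2) (μ.prod ν) := by
  refine (integrable_prod_iff' (hF.mul hf.comp_snd)).2
    ⟨hint.mono fun y hy => hy.mul_const (f y), hkf.norm.congr ?_⟩
  filter_upwards [hnonneg, heq] with y hy hk
  rw [← hk, norm_mul, norm_of_nonneg (integral_nonneg_of_ae hy), ← integral_mul_const]
  exact integral_congr_ae (hy.mono fun t ht => by simp [abs_of_nonneg ht])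

theorem integral_integral_mul_of_integral_eq
    (hF : Integrable (fun p : X × Y => F p.1 p.2 * f p.2) (μ.prod ν))
    (heq : ∀ᵐ y ∂ν, ∫ t, F t y ∂μ = k y) :
    ∫ t, ∫ y, F t y * f y ∂ν ∂μ = ∫ y, k y * f y ∂ν := by
  rw [integral_integral_swap hF]
  exact integral_congr_ae (heq.mono fun y hy => by simp only [← hy, integral_mul_const])

end KernelFubini

section BesselKernels

/-- The squared distance `x ^ 2 + y ^ 2 - 2 * x * y * cos θ` between points at distances `x`, `y`
from the origin seen under the angle `θ`, written through `w = sin² (θ / 2)`. -/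
def chordSq (x y w : ℝ) : ℝ := (x - y) ^ 2 + 4 * (x * y) * w

variable {lam s t x y w : ℝ}

theorem sq_sub_le_chordSq (hx : 0 ≤ x) (hy : 0 ≤ y) (hw : 0 ≤ w) : (x - y) ^ 2 ≤ chordSq x y w :=
  le_add_of_nonneg_right (by positivity)

theorem chordSq_nonneg (hx : 0 ≤ x) (hy : 0 ≤ y) (hw : 0 ≤ w) : 0 ≤ chordSq x y w :=
  (sq_nonneg _).trans (sq_sub_le_chordSq hx hy hw)

theorem chordSq_pos (hx : 0 < x) (hy : 0 < y) (hw : 0 < w) : 0 < chordSq x y w :=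
  add_pos_of_nonneg_of_pos (sq_nonneg _) (by positivity)

theorem continuous_chordSq (x y : ℝ) : Continuous (chordSq x y) := by
  unfold chordSq
  fun_prop

theorem besselHeatKernel_eq_integral (hlam : 0 < lam) (hs : 0 < s) (hx : 0 < x) (hy : 0 < y) :
    besselHeatKernel lam s x y =
      (x * y) ^ lam * s ^ (-(lam + 1 / 2)) / (4 ^ lam * Gamma (lam + 1 / 2)) *
        ∫ w, exp (-(chordSq x y w / (4 * s))) ∂betaMeasure lam lam := by
  have hxy : 0 < x * y := by positivity
  have hexp (w : ℝ) : exp (-(chordSq x y w / (4 * s))) =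
      exp (x * y / (2 * s) * (1 - 2 * w)) * exp (-(x ^ 2 + y ^ 2) / (4 * s)) := by
    rw [← exp_add, chordSq]
    congr 1
    field_simp
    ring
  have hpow : √(x * y) / (2 * s) * (x * y / (2 * s) / 2) ^ (lam - 1 / 2) =
      (x * y) ^ lam * s ^ (-(lam + 1 / 2)) / 4 ^ lam := by
    have h4 : (4 : ℝ) ^ (1 / 2 : ℝ) = 2 := by
      rw [← sqrt_eq_rpow, show (4 : ℝ) = 2 ^ 2 by norm_num, sqrt_sq zero_le_two]
    rw [show x * y / (2 * s) / 2 = x * y / (4 * s) by field_simp; norm_num,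
      div_rpow hxy.le (by positivity), mul_rpow zero_le_four hs.le, sqrt_eq_rpow,
      rpow_sub hxy, rpow_sub hs, rpow_sub four_pos, rpow_neg hs.le, rpow_add hs, h4]
    have : s ^ (1 / 2 : ℝ) * s ^ (1 / 2 : ℝ) = s := by rw [← rpow_add hs]; norm_num
    field_simp
    linear_combination this
  simp only [hexp, integral_mul_const]
  rw [besselHeatKernel, besselI_eq_integral_exp hlam (by positivity),
    ← div_div ((x * y) ^ lam * _), ← hpow]
  ring

theorem integral_rpow_mul_exp_neg_div {a A : ℝ} (ha : 0 < a) (hA : 0 < A) :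
    ∫ s in Ioi (0 : ℝ), s ^ (-a - 1) * exp (-(A / (4 * s))) = 4 ^ a * Gamma a * A ^ (-a) := by
  have h := integral_comp_rpow_Ioi (fun y : ℝ => y ^ (a - 1) * exp (-(A / 4 * y)))
    (p := -1) (by norm_num)
  rw [integral_rpow_mul_exp_neg_mul_Ioi ha (by positivity)] at h
  rw [show 4 ^ a * Gamma a * A ^ (-a) = (1 / (A / 4)) ^ a * Gamma a by
    rw [one_div_div, div_rpow zero_le_four hA.le, rpow_neg hA.le]; ring, ← h]
  refine setIntegral_congr_fun measurableSet_Ioi fun s hs => ?_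
  have hs : 0 < s := hs
  simp only [abs_neg, abs_one, one_mul, smul_eq_mul]
  rw [← mul_assoc, ← rpow_mul hs.le, ← rpow_add hs, rpow_neg_one]
  congr 2
  · ring
  · field_simp

theorem integrableOn_rpow_mul_exp_neg_div {a A : ℝ} (ha : 0 < a) (hA : 0 < A) :
    IntegrableOn (fun s : ℝ => s ^ (-a - 1) * exp (-(A / (4 * s)))) (Ioi 0) := by
  refine Integrable.of_integral_ne_zero ?_
  rw [integral_rpow_mul_exp_neg_div ha hA]
  positivity

theorem integral_heat_subordination (hlam : 0 < lam) (ht : 0 < t) (hx : 0 ≤ x) (hy : 0 ≤ y) :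
    ∫ s in Ioi (0 : ℝ), ∫ w, s ^ (-(lam + 1) - 1) *
        exp (-((t ^ 2 + chordSq x y w) / (4 * s))) ∂betaMeasure lam lam =
      4 ^ (lam + 1) * Gamma (lam + 1) *
        ∫ w, (t ^ 2 + chordSq x y w) ^ (-(lam + 1)) ∂betaMeasure lam lam := by
  have := isProbabilityMeasureBeta hlam hlam
  have hpos {w : ℝ} (hw : 0 ≤ w) : 0 < t ^ 2 + chordSq x y w :=
    add_pos_of_pos_of_nonneg (by positivity) (chordSq_nonneg hx hy hw)
  have hsub : ∀ᵐ w ∂betaMeasure lam lam, ∫ s in Ioi (0 : ℝ), s ^ (-(lam + 1) - 1) *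
      exp (-((t ^ 2 + chordSq x y w) / (4 * s))) =
      4 ^ (lam + 1) * Gamma (lam + 1) * (t ^ 2 + chordSq x y w) ^ (-(lam + 1)) := by
    filter_upwards [ae_mem_Ioo_betaMeasure lam lam] with w hw
    exact integral_rpow_mul_exp_neg_div (by positivity) (hpos hw.1.le)
  have hcont : ContinuousOn (fun w => 4 ^ (lam + 1) * Gamma (lam + 1) *
      (t ^ 2 + chordSq x y w) ^ (-(lam + 1)) * 1) (Icc 0 1) :=
    ((((continuous_chordSq x y).const_add (t ^ 2)).continuousOn.rpow_const fun w hw =>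
      Or.inl (hpos hw.1).ne').const_mul _).mul_const _
  have hprod := integrable_prod_mul_of_integral_eq (μ := volume.restrict (Ioi 0))
    (F := fun s w => s ^ (-(lam + 1) - 1) * exp (-((t ^ 2 + chordSq x y w) / (4 * s))))
    (Measurable.aestronglyMeasurable (by unfold chordSq; fun_prop))
    (Eventually.of_forall fun w => (ae_restrict_mem measurableSet_Ioi).mono fun s hs =>
      mul_nonneg (rpow_nonneg (le_of_lt hs) _) (exp_nonneg _))
    ((ae_mem_Ioo_betaMeasure lam lam).mono fun w hw =>
      integrableOn_rpow_mul_exp_neg_div (by positivity) (hpos hw.1.le))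
    hsub aestronglyMeasurable_const (integrable_betaMeasure_of_continuousOn hlam hlam hcont)
  simpa only [mul_one, integral_const_mul] using
    integral_integral_mul_of_integral_eq (f := fun _ => 1) hprod hsub

theorem besselPoissonKernel_eq_integral (hlam : 0 < lam) (ht : 0 < t) (hx : 0 < x) (hy : 0 < y) :
    besselPoissonKernel lam t x y =
      2 * Gamma (lam + 1) / (√π * Gamma (lam + 1 / 2)) * t * ((x * y) ^ lam *
        ∫ w, (t ^ 2 + chordSq x y w) ^ (-(lam + 1)) ∂betaMeasure lam lam) := by
  have hintegrand : ∀ s ∈ Ioi (0 : ℝ),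
      s ^ (-(3 : ℝ) / 2) * exp (-t ^ 2 / (4 * s)) * besselHeatKernel lam s x y =
      (x * y) ^ lam / (4 ^ lam * Gamma (lam + 1 / 2)) * ∫ w, s ^ (-(lam + 1) - 1) *
        exp (-((t ^ 2 + chordSq x y w) / (4 * s))) ∂betaMeasure lam lam := by
    intro s hs
    have hs : 0 < s := hs
    have hsplit (w : ℝ) : s ^ (-(lam + 1) - 1) * exp (-((t ^ 2 + chordSq x y w) / (4 * s))) =
        s ^ (-(3 : ℝ) / 2) * s ^ (-(lam + 1 / 2)) * exp (-t ^ 2 / (4 * s)) *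
          exp (-(chordSq x y w / (4 * s))) := by
      rw [← rpow_add hs, mul_assoc, ← exp_add]
      congr 2 <;> ring
    simp only [hsplit, integral_const_mul, besselHeatKernel_eq_integral hlam hs hx hy]
    ring
  rw [besselPoissonKernel, setIntegral_congr_fun measurableSet_Ioi hintegrand, integral_const_mul,
    integral_heat_subordination hlam ht hx.le hy.le, rpow_add four_pos, rpow_one]
  field_simp
  ring

end BesselKernels

section PoissonIntegral

variable {D lam q s t x y : ℝ}

theorem integrableOn_rpow_mul_one_add_sq_rpow (hs : -1 < s) (hq : s + 1 < 2 * q) :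
    IntegrableOn (fun r : ℝ => r ^ s * (1 + r ^ 2) ^ (-q)) (Ioi 0) := by
  have hcont : Continuous fun r : ℝ => (1 + r ^ 2) ^ (-q) :=
    (by fun_prop : Continuous fun r : ℝ => 1 + r ^ 2).rpow_const fun r => Or.inl (by positivity)
  have hbound {z p : ℝ} {l : Filter ℝ} (hp : p ≤ 0)
      (h : ∀ᶠ r in l, 0 < r ∧ r ^ z ≤ 1 + r ^ 2) :
      (fun r : ℝ => (1 + r ^ 2) ^ p) =O[l] fun r => r ^ (z * p) := by
    refine Asymptotics.IsBigO.of_bound 1 (h.mono fun r hr => ?_)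
    rw [one_mul, norm_of_nonneg (by positivity), norm_of_nonneg (rpow_nonneg hr.1.le _),
      rpow_mul hr.1.le]
    exact rpow_le_rpow_of_nonpos (rpow_pos_of_pos hr.1 _) hr.2 hp
  have hinfty := hbound (z := 2) (p := -q) (by linarith)
    ((eventually_gt_atTop 0).mono fun r hr => ⟨hr, by rw [rpow_two]; linarith⟩)
  have hzero := hbound (z := 0) (p := -q) (l := 𝓝[>] 0) (by linarith)
    (eventually_mem_nhdsWithin.mono fun r hr =>
      ⟨hr, by rw [rpow_zero]; linarith [sq_nonneg r]⟩)
  rw [show 2 * -q = -(2 * q) by ring] at hinfty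
  rw [show 0 * -q = -0 by ring] at hzero
  simpa using mellin_convergent_of_isBigO_scalar (s := s + 1)
    (hcont.locallyIntegrable.locallyIntegrableOn _) hinfty hq hzero (by linarith)

theorem rpow_mul_sq_add_rpow_comp_mul_sqrt (hD : 0 < D) {r : ℝ} (hr : 0 < r) :
    (√D * r) ^ s * ((√D * r) ^ 2 + D) ^ (-q) =
      D ^ (s / 2 - q) * (r ^ s * (1 + r ^ 2) ^ (-q)) := by
  rw [mul_pow, sq_sqrt hD.le, show D * r ^ 2 + D = D * (1 + r ^ 2) by ring,
    mul_rpow (sqrt_nonneg D) hr.le, mul_rpow hD.le (by positivity), sqrt_eq_rpow,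
    ← rpow_mul hD.le, sub_eq_add_neg, rpow_add hD, one_div_mul_eq_div]
  ring

theorem integrableOn_rpow_mul_sq_add_rpow (hD : 0 < D) (hs : -1 < s) (hq : s + 1 < 2 * q) :
    IntegrableOn (fun t : ℝ => t ^ s * (t ^ 2 + D) ^ (-q)) (Ioi 0) := by
  have h := integrableOn_Ioi_comp_mul_left_iff (fun t : ℝ => t ^ s * (t ^ 2 + D) ^ (-q)) 0
    (sqrt_pos.2 hD)
  rw [mul_zero] at h
  exact h.1 (IntegrableOn.congr_fun
    ((integrableOn_rpow_mul_one_add_sq_rpow hs hq).const_mul (D ^ (s / 2 - q)))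
    (fun r hr => (rpow_mul_sq_add_rpow_comp_mul_sqrt hD hr).symm) measurableSet_Ioi)

theorem integral_rpow_mul_sq_add_rpow (hD : 0 < D) :
    ∫ t in Ioi (0 : ℝ), t ^ s * (t ^ 2 + D) ^ (-q) =
      (∫ r in Ioi (0 : ℝ), r ^ s * (1 + r ^ 2) ^ (-q)) * D ^ ((s + 1) / 2 - q) := by
  have h := integral_comp_mul_left_Ioi (fun t : ℝ => t ^ s * (t ^ 2 + D) ^ (-q)) 0
    (sqrt_pos.2 hD)
  rw [mul_zero, setIntegral_congr_fun measurableSet_Ioi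
    fun r hr => rpow_mul_sq_add_rpow_comp_mul_sqrt hD hr, integral_const_mul, smul_eq_mul,
    eq_inv_mul_iff_mul_eq₀ (sqrt_pos.2 hD).ne'] at h
  rw [← h, show (s + 1) / 2 - q = 1 / 2 + (s / 2 - q) by ring, rpow_add hD, ← sqrt_eq_rpow]
  ring

/-- The kernel of the negative power `Δ_λ^{-s/2}` of the Bessel operator, up to a constant factor;
`w = sin² (θ / 2)` as in `chordSq`. -/
def besselRieszKernel (lam s x y : ℝ) : ℝ :=
  (x * y) ^ lam * ∫ w, chordSq x y w ^ ((s - 1) / 2 - lam) ∂betaMeasure lam lam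

theorem continuousOn_chordSq_rpow (hx : 0 < x) (hy : 0 < y) (hxy : x ≠ y) (q : ℝ) :
    ContinuousOn (fun w => chordSq x y w ^ q) (Icc 0 1) :=
  (continuous_chordSq x y).continuousOn.rpow_const fun _ hw => Or.inl
    ((sq_pos_of_ne_zero (sub_ne_zero.2 hxy)).trans_le
      (sq_sub_le_chordSq hx.le hy.le hw.1)).ne'

theorem integrable_prod_rpow_mul_sq_add_chordSq (hlam : 0 < lam) (hs : -1 < s)
    (hslam : s < 2 * lam + 1) (hx : 0 < x) (hy : 0 < y) (hxy : x ≠ y) :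
    Integrable (fun p : ℝ × ℝ => p.1 ^ s * (p.1 ^ 2 + chordSq x y p.2) ^ (-(lam + 1)))
      ((volume.restrict (Ioi 0)).prod (betaMeasure lam lam)) := by
  have := isProbabilityMeasureBeta hlam hlam
  have hbeta := ae_mem_Ioo_betaMeasure lam lam
  simpa only [mul_one] using integrable_prod_mul_of_integral_eq (f := fun _ => 1)
    (F := fun t w => t ^ s * (t ^ 2 + chordSq x y w) ^ (-(lam + 1)))
    (Measurable.aestronglyMeasurable (by unfold chordSq; fun_prop))
    (hbeta.mono fun w hw => (ae_restrict_mem measurableSet_Ioi).mono fun t ht =>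
      mul_nonneg (rpow_nonneg (le_of_lt ht) _)
        (rpow_nonneg (add_nonneg (sq_nonneg t) (chordSq_pos hx hy hw.1).le) _))
    (hbeta.mono fun w hw => integrableOn_rpow_mul_sq_add_rpow (chordSq_pos hx hy hw.1) hs
      (by linarith))
    (hbeta.mono fun w hw => integral_rpow_mul_sq_add_rpow (chordSq_pos hx hy hw.1))
    aestronglyMeasurable_const
    (integrable_betaMeasure_of_continuousOn hlam hlam
      (((continuousOn_chordSq_rpow hx hy hxy _).const_mul _).mul_const 1))

theorem besselPoissonKernel_mul_rpow_eq_integral (hlam : 0 < lam) (ht : 0 < t) (hx : 0 < x)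
    (hy : 0 < y) :
    besselPoissonKernel lam t x y * t ^ (s - 1) =
      2 * Gamma (lam + 1) / (√π * Gamma (lam + 1 / 2)) * (x * y) ^ lam *
        ∫ w, t ^ s * (t ^ 2 + chordSq x y w) ^ (-(lam + 1)) ∂betaMeasure lam lam := by
  rw [besselPoissonKernel_eq_integral hlam ht hx hy, rpow_sub_one ht.ne']
  simp only [integral_const_mul]
  field_simp

theorem integrableOn_besselPoissonKernel_mul_rpow (hlam : 0 < lam) (hs : -1 < s)
    (hslam : s < 2 * lam + 1) (hx : 0 < x) (hy : 0 < y) (hxy : x ≠ y) :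
    IntegrableOn (fun t => besselPoissonKernel lam t x y * t ^ (s - 1)) (Ioi 0) := by
  have := isProbabilityMeasureBeta hlam hlam
  refine IntegrableOn.congr_fun ((integrable_prod_rpow_mul_sq_add_chordSq hlam hs hslam hx hy
    hxy).integral_prod_left.const_mul _)
    (fun t ht => (besselPoissonKernel_mul_rpow_eq_integral hlam ht hx hy).symm) measurableSet_Ioi

theorem integral_besselPoissonKernel_mul_rpow (hlam : 0 < lam) (hs : -1 < s)
    (hslam : s < 2 * lam + 1) (hx : 0 < x) (hy : 0 < y) (hxy : x ≠ y) :
    ∫ t in Ioi (0 : ℝ), besselPoissonKernel lam t x y * t ^ (s - 1) =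
      2 * Gamma (lam + 1) / (√π * Gamma (lam + 1 / 2)) *
        (∫ r in Ioi (0 : ℝ), r ^ s * (1 + r ^ 2) ^ (-(lam + 1))) * besselRieszKernel lam s x y := by
  have := isProbabilityMeasureBeta hlam hlam
  have hinner : ∀ᵐ w ∂betaMeasure lam lam,
      ∫ t in Ioi (0 : ℝ), t ^ s * (t ^ 2 + chordSq x y w) ^ (-(lam + 1)) =
        (∫ r in Ioi (0 : ℝ), r ^ s * (1 + r ^ 2) ^ (-(lam + 1))) *
          chordSq x y w ^ ((s - 1) / 2 - lam) := by
    filter_upwards [ae_mem_Ioo_betaMeasure lam lam] with w hw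
    rw [integral_rpow_mul_sq_add_rpow (chordSq_pos hx hy hw.1)]
    ring_nf
  rw [setIntegral_congr_fun measurableSet_Ioi fun t ht =>
    besselPoissonKernel_mul_rpow_eq_integral hlam ht hx hy, integral_const_mul,
    integral_integral_swap (integrable_prod_rpow_mul_sq_add_chordSq hlam hs hslam hx hy hxy),
    integral_congr_ae hinner, integral_const_mul, besselRieszKernel]
  ring

theorem besselPoissonKernel_nonneg (hlam : 0 < lam) (ht : 0 < t) (hx : 0 < x) (hy : 0 < y) :
    0 ≤ besselPoissonKernel lam t x y := by
  rw [besselPoissonKernel_eq_integral hlam ht hx hy]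
  have hint : 0 ≤ ∫ w, (t ^ 2 + chordSq x y w) ^ (-(lam + 1)) ∂betaMeasure lam lam :=
    integral_nonneg_of_ae ((ae_mem_Ioo_betaMeasure lam lam).mono fun w hw =>
      rpow_nonneg (add_nonneg (sq_nonneg t) (chordSq_pos hx hy hw.1).le) _)
  positivity

theorem besselPoissonKernel_le_besselRieszKernel (hlam : 0 < lam) (hs : -1 ≤ s)
    (hslam : s ≤ 2 * lam + 1) (ht : 0 < t) (hx : 0 < x) (hy : 0 < y) (hxy : x ≠ y) :
    besselPoissonKernel lam t x y ≤
      2 * Gamma (lam + 1) / (√π * Gamma (lam + 1 / 2)) * t ^ (-s) *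
        besselRieszKernel lam s x y := by
  have hbeta := ae_mem_Ioo_betaMeasure lam lam
  have hpow : ∀ᵐ w ∂betaMeasure lam lam, (t ^ 2 + chordSq x y w) ^ (-(lam + 1)) ≤
      t ^ (-s - 1) * chordSq x y w ^ ((s - 1) / 2 - lam) := by
    filter_upwards [hbeta] with w hw
    have hD := chordSq_pos hx hy hw.1
    rw [show -(lam + 1) = (-s - 1) / 2 + ((s - 1) / 2 - lam) by ring, rpow_add (by positivity)]
    refine mul_le_mul ?_ (rpow_le_rpow_of_nonpos hD (by nlinarith) (by linarith))
      (by positivity) (by positivity)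
    calc (t ^ 2 + chordSq x y w) ^ ((-s - 1) / 2) ≤ (t ^ 2) ^ ((-s - 1) / 2) :=
          rpow_le_rpow_of_nonpos (by positivity) (by linarith) (by linarith)
      _ = t ^ (-s - 1) := by rw [← rpow_natCast, ← rpow_mul ht.le]; congr 1; push_cast; ring
  have hint := integral_mono_of_nonneg (hbeta.mono fun w hw => rpow_nonneg
      (add_nonneg (sq_nonneg t) (chordSq_pos hx hy hw.1).le) _)
    ((integrable_betaMeasure_of_continuousOn hlam hlam
      (continuousOn_chordSq_rpow hx hy hxy _)).const_mul _) hpow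
  rw [integral_const_mul] at hint
  calc besselPoissonKernel lam t x y
      ≤ 2 * Gamma (lam + 1) / (√π * Gamma (lam + 1 / 2)) * t * ((x * y) ^ lam *
        (t ^ (-s - 1) * ∫ w, chordSq x y w ^ ((s - 1) / 2 - lam) ∂betaMeasure lam lam)) := by
        rw [besselPoissonKernel_eq_integral hlam ht hx hy]
        gcongr
    _ = _ := by
        rw [besselRieszKernel, rpow_sub_one ht.ne']
        field_simp

theorem exists_measurable_eq_besselPoissonKernel (hlam : 0 < lam) (hx : 0 < x) :
    ∃ G : ℝ × ℝ → ℝ, Measurable G ∧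
      ∀ t ∈ Ioi (0 : ℝ), ∀ y ∈ Ioi (0 : ℝ), G (t, y) = besselPoissonKernel lam t x y := by
  have := isProbabilityMeasureBeta hlam hlam
  have hint : StronglyMeasurable fun p : ℝ × ℝ =>
      ∫ w, (p.1 ^ 2 + chordSq x p.2 w) ^ (-(lam + 1)) ∂betaMeasure lam lam :=
    (Measurable.stronglyMeasurable (by unfold chordSq; fun_prop) : StronglyMeasurable
      fun p : (ℝ × ℝ) × ℝ =>
        (p.1.1 ^ 2 + chordSq x p.1.2 p.2) ^ (-(lam + 1))).integral_prod_right'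
  exact ⟨_, (measurable_fst.const_mul (2 * Gamma (lam + 1) / (√π * Gamma (lam + 1 / 2)))).mul
    (((measurable_snd.const_mul x).pow_const lam).mul hint.measurable),
    fun t ht y hy => (besselPoissonKernel_eq_integral hlam ht hx hy).symm⟩

theorem measurable_besselRieszKernel (hlam : 0 < lam) (s x : ℝ) :
    Measurable (besselRieszKernel lam s x) := by
  have := isProbabilityMeasureBeta hlam hlam
  have hint : StronglyMeasurable fun y =>
      ∫ w, chordSq x y w ^ ((s - 1) / 2 - lam) ∂betaMeasure lam lam :=
    (Measurable.stronglyMeasurable (by unfold chordSq; fun_prop) : StronglyMeasurable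
      fun p : ℝ × ℝ => chordSq x p.1 p.2 ^ ((s - 1) / 2 - lam)).integral_prod_right'
  exact ((measurable_id.const_mul x).pow_const lam).mul hint.measurable

theorem ae_restrict_Ioi_ne (x : ℝ) :
    ∀ᵐ y ∂volume.restrict (Ioi (0 : ℝ)), y ∈ Ioi (0 : ℝ) ∧ x ≠ y := by
  filter_upwards [ae_restrict_mem measurableSet_Ioi, ae_restrict_of_ae (Measure.ae_ne volume x)]
    with y hy hne using ⟨hy, hne.symm⟩

variable {f : ℝ → ℝ}

theorem integrableOn_besselPoissonKernel_mul (hlam : 0 < lam) (hs : -1 ≤ s)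
    (hslam : s ≤ 2 * lam + 1) (hx : 0 < x)
    (hf : AEStronglyMeasurable f (volume.restrict (Ioi 0)))
    (hKf : IntegrableOn (fun y => besselRieszKernel lam s x y * f y) (Ioi 0)) (ht : 0 < t) :
    IntegrableOn (fun y => besselPoissonKernel lam t x y * f y) (Ioi 0) := by
  obtain ⟨G, hG, hGP⟩ := exists_measurable_eq_besselPoissonKernel hlam hx
  have hmeas : AEStronglyMeasurable (besselPoissonKernel lam t x) (volume.restrict (Ioi 0)) :=
    (hG.comp measurable_prodMk_left).aestronglyMeasurable.congr
      ((ae_restrict_mem measurableSet_Ioi).mono fun y hy => hGP t ht y hy)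
  refine Integrable.mono' (hKf.norm.const_mul
    (2 * Gamma (lam + 1) / (√π * Gamma (lam + 1 / 2)) * t ^ (-s))) (hmeas.mul hf) ?_
  filter_upwards [ae_restrict_Ioi_ne x] with y hy
  have hle := besselPoissonKernel_le_besselRieszKernel hlam hs hslam ht hx hy.1 hy.2
  have hPnonneg := besselPoissonKernel_nonneg hlam ht hx hy.1
  rw [norm_mul, norm_mul, norm_of_nonneg hPnonneg, ← mul_assoc]
  gcongr
  exact hle.trans (by gcongr; exact le_abs_self _)

theorem integral_poissonSemigroup_mul_rpow (hlam : 0 < lam) (hs : -1 < s)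
    (hslam : s < 2 * lam + 1) (hx : 0 < x)
    (hf : AEStronglyMeasurable f (volume.restrict (Ioi 0)))
    (hKf : IntegrableOn (fun y => besselRieszKernel lam s x y * f y) (Ioi 0)) :
    IntegrableOn (fun t => poissonSemigroup lam f t x * t ^ (s - 1)) (Ioi 0) ∧
    ∫ t in Ioi (0 : ℝ), poissonSemigroup lam f t x * t ^ (s - 1) =
      2 * Gamma (lam + 1) / (√π * Gamma (lam + 1 / 2)) *
        (∫ r in Ioi (0 : ℝ), r ^ s * (1 + r ^ 2) ^ (-(lam + 1))) *
        ∫ y in Ioi (0 : ℝ), besselRieszKernel lam s x y * f y := by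
  obtain ⟨G, hG, hGP⟩ := exists_measurable_eq_besselPoissonKernel hlam hx
  set κ := 2 * Gamma (lam + 1) / (√π * Gamma (lam + 1 / 2)) *
    ∫ r in Ioi (0 : ℝ), r ^ s * (1 + r ^ 2) ^ (-(lam + 1))
  have hmeas : AEStronglyMeasurable
      (fun p : ℝ × ℝ => besselPoissonKernel lam p.1 x p.2 * p.1 ^ (s - 1))
      ((volume.restrict (Ioi 0)).prod (volume.restrict (Ioi 0))) := by
    refine (hG.mul (measurable_fst.pow_const (s - 1))).aestronglyMeasurable.congr ?_
    filter_upwards [Measure.quasiMeasurePreserving_fst.ae (ae_restrict_mem measurableSet_Ioi),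
      Measure.quasiMeasurePreserving_snd.ae (ae_restrict_mem measurableSet_Ioi)] with p ht hy
    rw [Pi.mul_apply, hGP p.1 ht p.2 hy]
  have hkernel : ∀ᵐ y ∂volume.restrict (Ioi (0 : ℝ)),
      ∫ t in Ioi (0 : ℝ), besselPoissonKernel lam t x y * t ^ (s - 1) =
        κ * besselRieszKernel lam s x y :=
    (ae_restrict_Ioi_ne x).mono fun y hy =>
      integral_besselPoissonKernel_mul_rpow hlam hs hslam hx hy.1 hy.2
  have hprod := integrable_prod_mul_of_integral_eq hmeas
    ((ae_restrict_Ioi_ne x).mono fun y hy => (ae_restrict_mem measurableSet_Ioi).mono fun t ht =>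
      mul_nonneg (besselPoissonKernel_nonneg hlam ht hx hy.1) (rpow_nonneg (le_of_lt ht) _))
    ((ae_restrict_Ioi_ne x).mono fun y hy =>
      integrableOn_besselPoissonKernel_mul_rpow hlam hs hslam hx hy.1 hy.2)
    hkernel hf (by simpa only [mul_assoc] using hKf.const_mul κ)
  have hpull (t : ℝ) : ∫ y in Ioi (0 : ℝ), besselPoissonKernel lam t x y * t ^ (s - 1) * f y =
      poissonSemigroup lam f t x * t ^ (s - 1) := by
    rw [poissonSemigroup, ← integral_mul_const]
    congr with y
    ring
  have hinner := hprod.integral_prod_left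
  have hswap := integral_integral_mul_of_integral_eq hprod hkernel
  simp only [mul_assoc κ, integral_const_mul] at hswap
  simp only [hpull] at hinner hswap
  exact ⟨hinner, hswap⟩

end PoissonIntegral

section BesselRieszKernel

variable {lam p s w x x₁ x₂ y ξ : ℝ}

theorem chordSq_eq_sq_add (x y w : ℝ) :
    chordSq x y w = (x - y * (1 - 2 * w)) ^ 2 + 4 * y ^ 2 * (w * (1 - w)) := by
  rw [chordSq]
  ring

theorem sq_sub_mul_le_chordSq (x y : ℝ) (hw : w ∈ Ioo (0 : ℝ) 1) :
    (x - y * (1 - 2 * w)) ^ 2 ≤ chordSq x y w := by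
  rw [chordSq_eq_sq_add]
  exact le_add_of_nonneg_right
    (mul_nonneg (by positivity) (mul_nonneg hw.1.le (sub_nonneg.2 hw.2.le)))

theorem chordSq_le_four_mul (hx : 0 ≤ x) (hy : 0 ≤ y) (hw : w ∈ Ioo (0 : ℝ) 1)
    (h : 2 * |x - ξ| ≤ |x - y|) : chordSq x y w ≤ 4 * chordSq ξ y w := by
  have hclose : 4 * (x - ξ) ^ 2 ≤ chordSq x y w := by
    refine le_trans ?_ (sq_sub_le_chordSq hx hy hw.1.le)
    rw [← sq_abs (x - y), ← sq_abs (x - ξ)]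
    nlinarith [abs_nonneg (x - ξ)]
  have hnonneg : 0 ≤ 4 * y ^ 2 * (w * (1 - w)) :=
    mul_nonneg (by positivity) (mul_nonneg hw.1.le (sub_nonneg.2 hw.2.le))
  rw [chordSq_eq_sq_add] at hclose ⊢
  rw [chordSq_eq_sq_add]
  nlinarith [sq_nonneg (x - 2 * ξ + y * (1 - 2 * w))]

theorem chordSq_mul_mul (c x y w : ℝ) : chordSq (c * x) (c * y) w = c ^ 2 * chordSq x y w := by
  rw [chordSq, chordSq]
  ring

theorem besselRieszKernel_nonneg (hx : 0 < x) (hy : 0 < y) : 0 ≤ besselRieszKernel lam s x y :=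
  mul_nonneg (by positivity) (integral_nonneg_of_ae ((ae_mem_Ioo_betaMeasure lam lam).mono
    fun _ hw => rpow_nonneg (chordSq_pos hx hy hw.1).le _))

theorem besselRieszKernel_mul_mul {c : ℝ} (hc : 0 < c) (hx : 0 < x) (hy : 0 < y) :
    besselRieszKernel lam s (c * x) (c * y) = c ^ (s - 1) * besselRieszKernel lam s x y := by
  have hint : ∫ w, chordSq (c * x) (c * y) w ^ ((s - 1) / 2 - lam) ∂betaMeasure lam lam =
      ∫ w, (c ^ 2) ^ ((s - 1) / 2 - lam) * chordSq x y w ^ ((s - 1) / 2 - lam)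
        ∂betaMeasure lam lam := by
    refine integral_congr_ae ((ae_mem_Ioo_betaMeasure lam lam).mono fun w hw => ?_)
    simp only [chordSq_mul_mul, mul_rpow (sq_nonneg c) (chordSq_pos hx hy hw.1).le]
  have hpow : (c ^ 2) ^ lam * (c ^ 2) ^ ((s - 1) / 2 - lam) = c ^ (s - 1) := by
    rw [← rpow_add (by positivity), ← rpow_natCast, ← rpow_mul hc.le]
    congr 1
    push_cast
    ring
  rw [besselRieszKernel, besselRieszKernel, hint, integral_const_mul, ← hpow,
    show c * x * (c * y) = c ^ 2 * (x * y) by ring, mul_rpow (by positivity) (by positivity)]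
  ring

theorem isBigO_besselRieszKernel_one (hlam : 0 < lam) (hs : s < 1) :
    besselRieszKernel lam s 1 =O[atTop] fun r => r ^ (-(lam + 1 - s)) := by
  have := isProbabilityMeasureBeta hlam hlam
  refine Asymptotics.IsBigO.of_bound (2⁻¹ ^ (s - 1 - 2 * lam)) ?_
  filter_upwards [eventually_ge_atTop 2] with r hr
  have hr0 : 0 < r := by linarith
  have hpow : (2⁻¹ * r) ^ (s - 1 - 2 * lam) = ((2⁻¹ * r) ^ 2) ^ ((s - 1) / 2 - lam) := by
    rw [← rpow_natCast, ← rpow_mul (by positivity)]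
    congr 1
    push_cast
    ring
  have hint : ∫ w, chordSq 1 r w ^ ((s - 1) / 2 - lam) ∂betaMeasure lam lam ≤
      (2⁻¹ * r) ^ (s - 1 - 2 * lam) := by
    have hle : ∀ᵐ w ∂betaMeasure lam lam, chordSq 1 r w ^ ((s - 1) / 2 - lam) ≤
        ((2⁻¹ * r) ^ 2) ^ ((s - 1) / 2 - lam) := by
      filter_upwards [ae_mem_Ioo_betaMeasure lam lam] with w hw
      refine rpow_le_rpow_of_nonpos (by positivity) ?_ (by linarith)
      nlinarith [sq_sub_le_chordSq zero_le_one hr0.le hw.1.le]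
    simpa [hpow] using integral_mono_of_nonneg ((ae_mem_Ioo_betaMeasure lam lam).mono
      fun w hw => rpow_nonneg (chordSq_pos one_pos hr0 hw.1).le _) (integrable_const _) hle
  rw [norm_of_nonneg (besselRieszKernel_nonneg one_pos hr0), norm_of_nonneg (by positivity),
    besselRieszKernel, one_mul]
  calc r ^ lam * ∫ w, chordSq 1 r w ^ ((s - 1) / 2 - lam) ∂betaMeasure lam lam
      ≤ r ^ lam * (2⁻¹ * r) ^ (s - 1 - 2 * lam) := by gcongr
    _ = 2⁻¹ ^ (s - 1 - 2 * lam) * r ^ (-(lam + 1 - s)) := by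
        rw [mul_rpow (by norm_num) hr0.le, mul_left_comm, ← rpow_add hr0]
        congr 2
        ring

theorem hasDerivAt_chordSq (x y w : ℝ) :
    HasDerivAt (fun x => chordSq x y w) (2 * (x - y * (1 - 2 * w))) x := by
  unfold chordSq
  refine ((((hasDerivAt_id x).sub_const y).fun_pow 2).fun_add
    ((((hasDerivAt_id x).mul_const y).const_mul 4).mul_const w)).congr_deriv ?_
  simp only [id_eq]
  ring

theorem abs_deriv_rpow_mul_chordSq_rpow_le (hlam : 0 ≤ lam) (hx : 0 < x) (hy : 0 < y)
    (hw : w ∈ Ioo (0 : ℝ) 1) :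
    |lam * x ^ (lam - 1) * chordSq x y w ^ p +
        x ^ lam * (2 * (x - y * (1 - 2 * w)) * p * chordSq x y w ^ (p - 1))| ≤
      lam * (x ^ (lam - 1) * chordSq x y w ^ p) +
        2 * |p| * (x ^ lam * chordSq x y w ^ (p - 1 / 2)) := by
  have hD := chordSq_pos hx hy hw.1
  have hroot : |x - y * (1 - 2 * w)| ≤ chordSq x y w ^ (1 / 2 : ℝ) := by
    rw [← sqrt_eq_rpow]
    exact abs_le_sqrt (sq_sub_mul_le_chordSq x y hw)
  refine (abs_add_le _ _).trans (add_le_add ?_ ?_)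
  · rw [abs_of_nonneg (by positivity), mul_assoc]
  · rw [abs_mul, abs_mul, abs_mul, abs_mul, abs_of_nonneg (rpow_nonneg hx.le _),
      abs_of_nonneg (rpow_nonneg hD.le _), abs_two,
      show p - 1 / 2 = 1 / 2 + (p - 1) by ring, rpow_add hD]
    calc x ^ lam * (2 * |x - y * (1 - 2 * w)| * |p| * chordSq x y w ^ (p - 1))
        ≤ x ^ lam * (2 * chordSq x y w ^ (1 / 2 : ℝ) * |p| * chordSq x y w ^ (p - 1)) := by
          gcongr
      _ = _ := by ring

theorem deriv_rpow_mul_chordSq_rpow_bound_mono (hlam : 0 ≤ lam) (hp : p ≤ 0) (hξ : 0 < ξ)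
    (h1 : ξ ≤ x) (h2 : x ≤ 2 * ξ) (hy : 0 < y) (hw : w ∈ Ioo (0 : ℝ) 1)
    (h : 2 * (x - ξ) ≤ |x - y|) :
    lam * (ξ ^ (lam - 1) * chordSq ξ y w ^ p) +
        2 * |p| * (ξ ^ lam * chordSq ξ y w ^ (p - 1 / 2)) ≤
      2 * lam * 4⁻¹ ^ p * (x ^ lam * chordSq x y w ^ p / x) +
        2 * |p| * 4⁻¹ ^ (p - 1 / 2) * (x ^ lam * chordSq x y w ^ (p - 1 / 2)) := by
  have hx : 0 < x := hξ.trans_le h1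
  have hD := chordSq_pos hx hy hw.1
  have hDξ := chordSq_pos hξ hy hw.1
  have hcomp (q : ℝ) (hq : q ≤ 0) : chordSq ξ y w ^ q ≤ 4⁻¹ ^ q * chordSq x y w ^ q := by
    have hfour : chordSq x y w ≤ 4 * chordSq ξ y w := chordSq_le_four_mul hx.le hy.le hw
      (by rwa [abs_of_nonneg (by linarith)])
    rw [← mul_rpow (by norm_num) hD.le]
    exact rpow_le_rpow_of_nonpos (by positivity) (by linarith) hq
  have hrpow : ξ ^ lam ≤ x ^ lam := rpow_le_rpow hξ.le h1 hlam
  have hrpow_sub_one : ξ ^ (lam - 1) ≤ 2 * (x ^ lam / x) := by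
    calc ξ ^ (lam - 1) = ξ ^ lam / ξ := rpow_sub_one hξ.ne' _
      _ ≤ x ^ lam / (x / 2) := div_le_div₀ (by positivity) hrpow (by positivity) (by linarith)
      _ = 2 * (x ^ lam / x) := by field_simp
  calc lam * (ξ ^ (lam - 1) * chordSq ξ y w ^ p) +
        2 * |p| * (ξ ^ lam * chordSq ξ y w ^ (p - 1 / 2))
      ≤ lam * (2 * (x ^ lam / x) * (4⁻¹ ^ p * chordSq x y w ^ p)) +
        2 * |p| * (x ^ lam * (4⁻¹ ^ (p - 1 / 2) * chordSq x y w ^ (p - 1 / 2))) := by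
        gcongr
        exacts [hcomp p hp, hcomp _ (by linarith)]
    _ = _ := by ring

theorem abs_rpow_mul_chordSq_rpow_sub_le (hlam : 0 ≤ lam) (hp : p ≤ 0) (hx₂ : 0 < x₂)
    (h12 : x₂ < x₁) (h21 : x₁ < 2 * x₂) (hy : 0 < y) (hw : w ∈ Ioo (0 : ℝ) 1)
    (h : 2 * (x₁ - x₂) ≤ |x₁ - y|) :
    |x₁ ^ lam * chordSq x₁ y w ^ p - x₂ ^ lam * chordSq x₂ y w ^ p| ≤
      (2 * lam * 4⁻¹ ^ p * (x₁ ^ lam * chordSq x₁ y w ^ p / x₁) +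
        2 * |p| * 4⁻¹ ^ (p - 1 / 2) * (x₁ ^ lam * chordSq x₁ y w ^ (p - 1 / 2))) *
          (x₁ - x₂) := by
  have hpos : ∀ ξ ∈ Icc x₂ x₁, 0 < ξ := fun ξ hξ => hx₂.trans_le hξ.1
  have hmvt := (convex_Icc x₂ x₁).norm_image_sub_le_of_norm_hasDerivWithin_le
    (fun ξ hξ => ((hasDerivAt_rpow_const (p := lam) (Or.inl (hpos ξ hξ).ne')).fun_mul
      ((hasDerivAt_chordSq ξ y w).rpow_const (p := p)
        (Or.inl (chordSq_pos (hpos ξ hξ) hy hw.1).ne'))).hasDerivWithinAt)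
    (fun ξ hξ => (abs_deriv_rpow_mul_chordSq_rpow_le hlam (hpos ξ hξ) hy hw).trans
      (deriv_rpow_mul_chordSq_rpow_bound_mono hlam hp (hpos ξ hξ) hξ.2 (by linarith [hξ.1]) hy hw
        (by linarith [hξ.1])))
    (left_mem_Icc.2 h12.le) (right_mem_Icc.2 h12.le)
  rwa [norm_eq_abs, norm_of_nonneg (sub_nonneg.2 h12.le)] at hmvt

theorem besselRieszKernel_eq_mul_mul (hx : 0 ≤ x) (hy : 0 ≤ y) :
    besselRieszKernel lam s x y =
      y ^ lam * (x ^ lam * ∫ w, chordSq x y w ^ ((s - 1) / 2 - lam) ∂betaMeasure lam lam) := by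
  rw [besselRieszKernel, mul_rpow hx hy]
  ring

theorem abs_besselRieszKernel_sub_le (hlam : 0 < lam) (hp : p = (s - 1) / 2 - lam) (hp0 : p ≤ 0)
    (hx₂ : 0 < x₂) (h12 : x₂ < x₁) (h21 : x₁ < 2 * x₂) (hy : 0 < y)
    (h : 2 * (x₁ - x₂) ≤ |x₁ - y|) :
    |besselRieszKernel lam s x₁ y - besselRieszKernel lam s x₂ y| ≤
      (2 * lam * 4⁻¹ ^ p * (besselRieszKernel lam s x₁ y / x₁) +
        2 * |p| * 4⁻¹ ^ (p - 1 / 2) * besselRieszKernel lam (s - 1) x₁ y) * (x₁ - x₂) := by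
  have hx₁ : 0 < x₁ := hx₂.trans h12
  have hne₁ : x₁ ≠ y := fun he => by
    rw [he, sub_self, abs_zero] at h
    linarith
  have hne₂ : x₂ ≠ y := fun he => by
    rw [← he, abs_of_pos (sub_pos.2 h12)] at h
    linarith
  have hint {x : ℝ} (hx : 0 < x) (hne : x ≠ y) (q : ℝ) :
      Integrable (fun w => x ^ lam * chordSq x y w ^ q) (betaMeasure lam lam) :=
    (integrable_betaMeasure_of_continuousOn hlam hlam
      (continuousOn_chordSq_rpow hx hy hne q)).const_mul _
  have hint_p := ((hint hx₁ hne₁ p).div_const x₁).const_mul (2 * lam * 4⁻¹ ^ p)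
  have hint_half := (hint hx₁ hne₁ (p - 1 / 2)).const_mul (2 * |p| * 4⁻¹ ^ (p - 1 / 2))
  have hmvt := norm_integral_le_of_norm_le
    (f := fun w => x₁ ^ lam * chordSq x₁ y w ^ p - x₂ ^ lam * chordSq x₂ y w ^ p)
    ((hint_p.fun_add hint_half).mul_const (x₁ - x₂))
    ((ae_mem_Ioo_betaMeasure lam lam).mono fun w hw =>
      abs_rpow_mul_chordSq_rpow_sub_le hlam.le hp0 hx₂ h12 h21 hy hw h)
  rw [integral_sub (hint hx₁ hne₁ p) (hint hx₂ hne₂ p), integral_mul_const,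
    integral_add hint_p hint_half, norm_eq_abs] at hmvt
  simp only [integral_const_mul, integral_div] at hmvt
  simp only [besselRieszKernel_eq_mul_mul hx₁.le hy.le,
    besselRieszKernel_eq_mul_mul hx₂.le hy.le, ← mul_sub, abs_mul,
    abs_of_nonneg (rpow_nonneg hy.le lam), show (s - 1 - 1) / 2 - lam = p - 1 / 2 by rw [hp]; ring,
    ← hp]
  refine (mul_le_mul_of_nonneg_left hmvt (rpow_nonneg hy.le lam)).trans_eq ?_
  ring

theorem rpow_mul_add_mul_rpow_comp_sq {a A B q t : ℝ} (hA : 0 < A) (hB : 0 < B) (ht : 0 < t) :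
    t ^ ((2 : ℝ) - 1) * ((t ^ (2 : ℝ)) ^ (a - 1) * (A + B * t ^ (2 : ℝ)) ^ (-q)) =
      B ^ (-q) * (t ^ (2 * a - 1) * (t ^ 2 + A / B) ^ (-q)) := by
  rw [rpow_two, show A + B * t ^ 2 = B * (t ^ 2 + A / B) by field_simp; ring,
    mul_rpow hB.le (by positivity), ← rpow_natCast, ← rpow_mul ht.le, ← mul_assoc, ← rpow_add ht,
    mul_left_comm]
  congr 3
  push_cast
  ring

theorem integrableOn_rpow_mul_add_mul_rpow {a A B q : ℝ} (ha : 0 < a) (haq : a < q) (hA : 0 < A)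
    (hB : 0 < B) : IntegrableOn (fun w : ℝ => w ^ (a - 1) * (A + B * w) ^ (-q)) (Ioi 0) := by
  refine (integrableOn_Ioi_comp_rpow_iff' _ two_ne_zero).1 (IntegrableOn.congr_fun
    ((integrableOn_rpow_mul_sq_add_rpow (D := A / B) (s := 2 * a - 1) (q := q) (by positivity)
      (by linarith) (by linarith)).const_mul (B ^ (-q)))
    (fun t ht => (rpow_mul_add_mul_rpow_comp_sq hA hB ht).symm) measurableSet_Ioi)

theorem integral_rpow_mul_add_mul_rpow {a A B q : ℝ} (hA : 0 < A) (hB : 0 < B) :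
    ∫ w in Ioi (0 : ℝ), w ^ (a - 1) * (A + B * w) ^ (-q) =
      2 * (∫ r in Ioi (0 : ℝ), r ^ (2 * a - 1) * (1 + r ^ 2) ^ (-q)) *
        (A ^ (a - q) * B ^ (-a)) := by
  rw [← integral_comp_rpow_Ioi_of_pos two_pos]
  simp only [smul_eq_mul, mul_assoc (2 : ℝ), integral_const_mul]
  rw [setIntegral_congr_fun measurableSet_Ioi fun t ht => rpow_mul_add_mul_rpow_comp_sq hA hB ht,
    integral_const_mul, integral_rpow_mul_sq_add_rpow (by positivity), div_rpow hA.le hB.le,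
    show (2 * a - 1 + 1) / 2 - q = a - q by ring, rpow_sub hB, rpow_neg hB.le, rpow_neg hB.le]
  field_simp

theorem add_mul_rpow_neg_le {a A B q : ℝ} (ha : 0 ≤ a) (haq : a ≤ q) (hA : 0 < A) (hB : 0 < B)
    (hw : 1 / 2 ≤ w) : (A + B * w) ^ (-q) ≤ 2 ^ a * (A ^ (a - q) * B ^ (-a)) := by
  have hBw : 2⁻¹ * B ≤ A + B * w := by nlinarith
  have hAw : A ≤ A + B * w := by nlinarith
  calc (A + B * w) ^ (-q) = (A + B * w) ^ (-a) * (A + B * w) ^ (a - q) := by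
        rw [← rpow_add (by linarith)]
        congr 1
        ring
    _ ≤ (2⁻¹ * B) ^ (-a) * A ^ (a - q) := mul_le_mul
        (rpow_le_rpow_of_nonpos (by positivity) hBw (by linarith))
        (rpow_le_rpow_of_nonpos hA hAw (by linarith)) (rpow_nonneg (by linarith) _) (by positivity)
    _ = 2 ^ a * (A ^ (a - q) * B ^ (-a)) := by
        rw [mul_rpow (by norm_num) hB.le, inv_rpow zero_le_two, rpow_neg zero_le_two, inv_inv]
        ring

theorem one_sub_rpow_le_two_rpow_abs (hw : 0 ≤ w) (hw2 : w ≤ 1 / 2) (p : ℝ) :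
    (1 - w) ^ p ≤ 2 ^ |p| := by
  calc (1 - w) ^ p ≤ (1 - w) ^ (-|p|) :=
        rpow_le_rpow_of_exponent_ge (by linarith) (by linarith) (neg_abs_le p)
    _ ≤ 2⁻¹ ^ (-|p|) :=
        rpow_le_rpow_of_nonpos (by norm_num) (by linarith) (neg_nonpos.2 (abs_nonneg p))
    _ = 2 ^ |p| := by rw [inv_rpow zero_le_two, rpow_neg zero_le_two, inv_inv]

theorem beta_density_mul_add_mul_rpow_le {a b A B q : ℝ} (ha : 0 < a) (hb : 0 < b) (haq : a ≤ q)
    (hA : 0 < A) (hB : 0 < B) (hw : w ∈ Ioo (0 : ℝ) 1) :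
    1 / beta a b * w ^ (a - 1) * (1 - w) ^ (b - 1) * (A + B * w) ^ (-q) ≤
      1 / beta a b * w ^ (a - 1) * (1 - w) ^ (b - 1) * (2 ^ a * (A ^ (a - q) * B ^ (-a))) +
        1 / beta a b * 2 ^ |b - 1| * (w ^ (a - 1) * (A + B * w) ^ (-q)) := by
  obtain ⟨hw, hw1⟩ := hw
  have hbeta := beta_pos ha hb
  rcases le_total (1 / 2) w with h | h
  · refine le_add_of_le_of_nonneg ?_ (by positivity)
    gcongr
    exact add_mul_rpow_neg_le ha.le haq hA hB h
  · refine le_add_of_nonneg_of_le (by positivity) ?_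
    calc 1 / beta a b * w ^ (a - 1) * (1 - w) ^ (b - 1) * (A + B * w) ^ (-q)
        ≤ 1 / beta a b * w ^ (a - 1) * 2 ^ |b - 1| * (A + B * w) ^ (-q) := by
          gcongr
          exact one_sub_rpow_le_two_rpow_abs hw.le h _
      _ = 1 / beta a b * 2 ^ |b - 1| * (w ^ (a - 1) * (A + B * w) ^ (-q)) := by ring

theorem exists_integral_add_mul_rpow_betaMeasure_le {a b q : ℝ} (ha : 0 < a) (hb : 0 < b)
    (haq : a < q) : ∃ C : ℝ, ∀ A B : ℝ, 0 < A → 0 < B →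
      ∫ w, (A + B * w) ^ (-q) ∂betaMeasure a b ≤ C * (A ^ (a - q) * B ^ (-a)) := by
  have := isProbabilityMeasureBeta ha hb
  have hbeta := beta_pos ha hb
  set Q := 1 / beta a b * 2 ^ |b - 1|
  refine ⟨2 ^ a + Q * (2 * ∫ r in Ioi (0 : ℝ), r ^ (2 * a - 1) * (1 + r ^ 2) ^ (-q)),
    fun A B hA hB => ?_⟩
  set c := 2 ^ a * (A ^ (a - q) * B ^ (-a))
  have hc := (integrable_betaMeasure_iff ha hb).1 (integrable_const c)
  have hIoi : IntegrableOn (fun w => Q * (w ^ (a - 1) * (A + B * w) ^ (-q))) (Ioi 0) :=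
    (integrableOn_rpow_mul_add_mul_rpow ha haq hA hB).const_mul Q
  have hIoo : IntegrableOn (fun w => Q * (w ^ (a - 1) * (A + B * w) ^ (-q))) (Ioo 0 1) :=
    hIoi.mono_set Ioo_subset_Ioi_self
  calc ∫ w, (A + B * w) ^ (-q) ∂betaMeasure a b
      ≤ ∫ w in Ioo (0 : ℝ) 1, (1 / beta a b * w ^ (a - 1) * (1 - w) ^ (b - 1) * c +
          Q * (w ^ (a - 1) * (A + B * w) ^ (-q))) := by
        rw [integral_betaMeasure ha hb]
        refine integral_mono_of_nonneg ?_ (hc.add hIoo) ((ae_restrict_mem measurableSet_Ioo).mono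
          fun w => beta_density_mul_add_mul_rpow_le ha hb haq.le hA hB)
        filter_upwards [ae_restrict_mem measurableSet_Ioo] with w ⟨hw, hw1⟩
        positivity
    _ ≤ c + ∫ w in Ioi (0 : ℝ), Q * (w ^ (a - 1) * (A + B * w) ^ (-q)) := by
        rw [integral_add hc hIoo, ← integral_betaMeasure ha hb fun _ => c, integral_const,
          probReal_univ, one_smul]
        gcongr
        · filter_upwards [ae_restrict_mem measurableSet_Ioi] with w hw
          have hw : 0 < w := hw
          positivity
        · exact Ioo_subset_Ioi_self
    _ = _ := by
        rw [integral_const_mul, integral_rpow_mul_add_mul_rpow hA hB]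
        ring

theorem exists_besselRieszKernel_le (hlam : 0 < lam) (hs : s < 1) :
    ∃ C : ℝ, ∀ x y : ℝ, 0 < x → 0 < y → x ≠ y →
      besselRieszKernel lam s x y ≤ C * |x - y| ^ (s - 1) := by
  obtain ⟨C, hC⟩ := exists_integral_add_mul_rpow_betaMeasure_le (q := lam + (1 - s) / 2) hlam hlam
    (by linarith)
  refine ⟨C * 4 ^ (-lam), fun x y hx hy hxy => ?_⟩
  have hdist : 0 < |x - y| := abs_pos.2 (sub_ne_zero.2 hxy)
  have hpow : ((x - y) ^ 2) ^ (lam - (lam + (1 - s) / 2)) = |x - y| ^ (s - 1) := by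
    rw [← sq_abs, ← rpow_natCast, ← rpow_mul hdist.le]
    congr 1
    push_cast
    ring
  calc besselRieszKernel lam s x y
      = (x * y) ^ lam * ∫ w, ((x - y) ^ 2 + 4 * (x * y) * w) ^ (-(lam + (1 - s) / 2))
          ∂betaMeasure lam lam := by
        rw [besselRieszKernel, show (s - 1) / 2 - lam = -(lam + (1 - s) / 2) by ring]
        rfl
    _ ≤ (x * y) ^ lam * (C * (((x - y) ^ 2) ^ (lam - (lam + (1 - s) / 2)) *
          (4 * (x * y)) ^ (-lam))) := by
        gcongr
        exact hC _ _ (sq_pos_of_ne_zero (sub_ne_zero.2 hxy)) (by positivity)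
    _ = C * 4 ^ (-lam) * |x - y| ^ (s - 1) := by
        rw [hpow, mul_rpow zero_le_four (by positivity), rpow_neg (by positivity : 0 ≤ x * y)]
        field_simp

end BesselRieszKernel

section DistancePowers

variable {γ r : ℝ}

theorem integrableOn_comp_abs_sub {g : ℝ → ℝ} {S : Set ℝ} (hS : MeasurableSet S)
    (hg : IntegrableOn g (Ioi 0 ∩ S)) (x : ℝ) :
    IntegrableOn (fun y => g |x - y|) ((fun y => |x - y|) ⁻¹' S) := by
  have hind : IntegrableOn (S.indicator g) (Ioi 0) := by
    rwa [IntegrableOn, integrable_indicator_iff hS, IntegrableOn, Measure.restrict_restrict hS,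
      inter_comm]
  rw [← integrable_indicator_iff (hS.preimage (by fun_prop))]
  exact ((integrable_fun_norm_addHaar volume (f := S.indicator g)).2
    (by simpa using hind)).comp_sub_left x

theorem integral_comp_abs_sub {S : Set ℝ} (hS : MeasurableSet S) (g : ℝ → ℝ) (x : ℝ) :
    ∫ y in (fun y => |x - y|) ⁻¹' S, g |x - y| = 2 * ∫ t in Ioi 0 ∩ S, g t := by
  rw [← integral_indicator (hS.preimage (by fun_prop)), ← setIntegral_indicator hS,
    ← integral_comp_abs, ← integral_sub_left_eq_self (fun y => S.indicator g |y|) volume x]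
  rfl

theorem ball_eq_preimage_abs_sub (x r : ℝ) : ball x r = (fun y => |x - y|) ⁻¹' Iio r := by
  ext y
  simp only [mem_ball', Real.dist_eq, mem_Iio, mem_preimage]

theorem compl_ball_eq_preimage_abs_sub (x r : ℝ) : (ball x r)ᶜ = (fun y => |x - y|) ⁻¹' Ici r := by
  ext y
  simp only [mem_compl_iff, mem_ball', Real.dist_eq, not_lt, mem_Ici, mem_preimage]

theorem integrableOn_ball_abs_sub_rpow (hγ : -1 < γ) (hr : 0 < r) (x : ℝ) :
    IntegrableOn (fun y => |x - y| ^ γ) (ball x r) := by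
  rw [ball_eq_preimage_abs_sub]
  refine integrableOn_comp_abs_sub (g := fun t => t ^ γ) measurableSet_Iio ?_ x
  rw [Ioi_inter_Iio]
  exact (intervalIntegral.integrableOn_Ioo_rpow_iff hr).2 hγ

theorem integral_ball_abs_sub_rpow (hγ : -1 < γ) (hr : 0 < r) (x : ℝ) :
    ∫ y in ball x r, |x - y| ^ γ = 2 / (γ + 1) * r ^ (γ + 1) := by
  rw [ball_eq_preimage_abs_sub, integral_comp_abs_sub measurableSet_Iio fun t => t ^ γ,
    Ioi_inter_Iio, ← integral_Ioc_eq_integral_Ioo, ← intervalIntegral.integral_of_le hr.le,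
    integral_rpow (Or.inl hγ), zero_rpow (by linarith)]
  ring

theorem integrableOn_compl_ball_abs_sub_rpow (hγ : γ < -1) (hr : 0 < r) (x : ℝ) :
    IntegrableOn (fun y => |x - y| ^ γ) (ball x r)ᶜ := by
  rw [compl_ball_eq_preimage_abs_sub]
  refine integrableOn_comp_abs_sub (g := fun t => t ^ γ) measurableSet_Ici ?_ x
  rw [inter_eq_right.2 (Ici_subset_Ioi.2 hr)]
  exact Iff.mpr integrableOn_Ici_iff_integrableOn_Ioi (integrableOn_Ioi_rpow_of_lt hγ hr)

theorem integral_compl_ball_abs_sub_rpow (hγ : γ < -1) (hr : 0 < r) (x : ℝ) :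
    ∫ y in (ball x r)ᶜ, |x - y| ^ γ = 2 / -(γ + 1) * r ^ (γ + 1) := by
  rw [compl_ball_eq_preimage_abs_sub, integral_comp_abs_sub measurableSet_Ici fun t => t ^ γ,
    inter_eq_right.2 (Ici_subset_Ioi.2 hr), integral_Ici_eq_integral_Ioi,
    integral_Ioi_rpow_of_lt hγ hr, div_neg]
  ring

theorem setIntegral_abs_sub_rpow_le {s r x : ℝ} {S : Set ℝ} (hs : 0 < s) (hr : 0 < r)
    (hS : S ⊆ ball x r) : ∫ y in S, |x - y| ^ (s - 1) ≤ 2 / s * r ^ s := by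
  have hs1 : -1 < s - 1 := by linarith
  calc ∫ y in S, |x - y| ^ (s - 1) ≤ ∫ y in ball x r, |x - y| ^ (s - 1) :=
        setIntegral_mono_set (integrableOn_ball_abs_sub_rpow hs1 hr x)
          (.of_forall fun y => by positivity) hS.eventuallyLE
    _ = 2 / s * r ^ s := by rw [integral_ball_abs_sub_rpow hs1 hr, sub_add_cancel]

end DistancePowers

/-- A nonnegative kernel on `(0,∞)` with the size and smoothness in the first variable of the Riesz
kernel `|x - y| ^ (s - 1)` of fractional integration of order `s`, homogeneous under dilations,
and such that `K 1` decays at infinity like `r ^ (-d)`. The summand `K x₁ y / x₁` in the smoothness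
condition allows for a power weight in `x`. -/
structure IsRieszTypeKernel (s d : ℝ) (K : ℝ → ℝ → ℝ) : Prop where
  measurable (x : ℝ) : Measurable (K x)
  nonneg {x y : ℝ} : 0 < x → 0 < y → 0 ≤ K x y
  mul_mul {c x y : ℝ} : 0 < c → 0 < x → 0 < y → K (c * x) (c * y) = c ^ (s - 1) * K x y
  exists_le : ∃ C, 0 ≤ C ∧ ∀ x y, 0 < x → 0 < y → x ≠ y → K x y ≤ C * |x - y| ^ (s - 1)
  exists_abs_sub_le : ∃ C, 0 ≤ C ∧ ∀ x₁ x₂ y, 0 < x₂ → x₂ < x₁ → x₁ < 2 * x₂ → 0 < y →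
    2 * (x₁ - x₂) ≤ |x₁ - y| →
      |K x₁ y - K x₂ y| ≤ C * (x₁ - x₂) * (K x₁ y / x₁ + |x₁ - y| ^ (s - 2))
  isBigO_one : K 1 =O[atTop] fun r => r ^ (-d)

theorem exists_abs_besselRieszKernel_sub_le {lam s : ℝ} (hlam : 0 < lam) (hs : s < 1) :
    ∃ C, 0 ≤ C ∧ ∀ x₁ x₂ y, 0 < x₂ → x₂ < x₁ → x₁ < 2 * x₂ → 0 < y →
      2 * (x₁ - x₂) ≤ |x₁ - y| →
        |besselRieszKernel lam s x₁ y - besselRieszKernel lam s x₂ y| ≤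
          C * (x₁ - x₂) * (besselRieszKernel lam s x₁ y / x₁ + |x₁ - y| ^ (s - 2)) := by
  obtain ⟨C, hC⟩ := exists_besselRieszKernel_le (s := s - 1) hlam (by linarith)
  set p := (s - 1) / 2 - lam with hp
  set A := 2 * lam * 4⁻¹ ^ p
  set B := 2 * |p| * 4⁻¹ ^ (p - 1 / 2)
  have hA : 0 ≤ A := by positivity
  refine ⟨A + B * |C|, by positivity, fun x₁ x₂ y hx₂ h12 h21 hy h => ?_⟩
  have hx₁ : 0 < x₁ := hx₂.trans h12
  have hK := besselRieszKernel_nonneg (lam := lam) (s := s) hx₁ hy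
  have hdist : 0 < |x₁ - y| := by linarith
  have hsize : besselRieszKernel lam (s - 1) x₁ y ≤ |C| * |x₁ - y| ^ (s - 2) := by
    refine (hC x₁ y hx₁ hy (sub_ne_zero.1 (abs_pos.1 hdist))).trans ?_
    rw [show s - 1 - 1 = s - 2 by ring]
    gcongr
    exact le_abs_self C
  calc |besselRieszKernel lam s x₁ y - besselRieszKernel lam s x₂ y|
      ≤ (A * (besselRieszKernel lam s x₁ y / x₁) + B * besselRieszKernel lam (s - 1) x₁ y) *
          (x₁ - x₂) :=
        abs_besselRieszKernel_sub_le hlam hp (by linarith) hx₂ h12 h21 hy h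
    _ ≤ (A * (besselRieszKernel lam s x₁ y / x₁) + B * |C| * |x₁ - y| ^ (s - 2)) *
          (x₁ - x₂) := by
        rw [mul_assoc B]
        gcongr
    _ ≤ ((A + B * |C|) * (besselRieszKernel lam s x₁ y / x₁) +
          (A + B * |C|) * |x₁ - y| ^ (s - 2)) * (x₁ - x₂) := by
        gcongr
        · exact le_add_of_nonneg_right (by positivity)
        · exact le_add_of_nonneg_left hA
    _ = (A + B * |C|) * (x₁ - x₂) *
          (besselRieszKernel lam s x₁ y / x₁ + |x₁ - y| ^ (s - 2)) := by ring

theorem isRieszTypeKernel_besselRieszKernel {lam s : ℝ} (hlam : 0 < lam) (hs : s < 1) :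
    IsRieszTypeKernel s (lam + 1 - s) (besselRieszKernel lam s) where
  measurable x := measurable_besselRieszKernel hlam s x
  nonneg hx hy := besselRieszKernel_nonneg hx hy
  mul_mul hc hx hy := besselRieszKernel_mul_mul hc hx hy
  exists_le := by
    obtain ⟨C, hC⟩ := exists_besselRieszKernel_le hlam hs
    exact ⟨|C|, abs_nonneg C, fun x y hx hy hxy => (hC x y hx hy hxy).trans
      (mul_le_mul_of_nonneg_right (le_abs_self C) (by positivity))⟩
  exists_abs_sub_le := exists_abs_besselRieszKernel_sub_le hlam hs
  isBigO_one := isBigO_besselRieszKernel_one hlam hs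

/-- The Mellin moment `∫₀^∞ K(1, r) r ^ a dr` of a kernel. -/
def kernelMoment (K : ℝ → ℝ → ℝ) (a : ℝ) : ℝ := ∫ r in Ioi (0 : ℝ), K 1 r * r ^ a

namespace IsRieszTypeKernel

variable {s d a x : ℝ} {K : ℝ → ℝ → ℝ}

theorem kernelMoment_nonneg (hK : IsRieszTypeKernel s d K) (a : ℝ) : 0 ≤ kernelMoment K a :=
  setIntegral_nonneg measurableSet_Ioi fun _ hr =>
    mul_nonneg (hK.nonneg one_pos hr) (rpow_nonneg (le_of_lt hr) a)

theorem integrableOn_Ioc_one_mul_rpow (hK : IsRieszTypeKernel s d K) (hs : 0 < s) (ha : 0 ≤ a)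
    (R : ℝ) : IntegrableOn (fun r => K 1 r * r ^ a) (Ioc 0 R) := by
  obtain ⟨C, hC0, hC⟩ := hK.exists_le
  have hsub : Ioc 0 R ⊆ ball 1 (|R| + 1) := fun y hy => by
    rw [mem_ball, Real.dist_eq, abs_lt]
    constructor <;> linarith [hy.1, hy.2, le_abs_self R]
  have hbound : IntegrableOn (fun r : ℝ => C * R ^ a * |1 - r| ^ (s - 1)) (Ioc 0 R) :=
    ((integrableOn_ball_abs_sub_rpow (by linarith) (by positivity) 1).mono_set hsub).const_mul _
  refine hbound.mono' ((hK.measurable 1).mul (by fun_prop)).aestronglyMeasurable ?_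
  filter_upwards [ae_restrict_of_ae (Measure.ae_ne volume 1), ae_restrict_mem measurableSet_Ioc]
    with r hr1 ⟨hr, hrR⟩
  rw [norm_of_nonneg (mul_nonneg (hK.nonneg one_pos hr) (by positivity)), mul_right_comm]
  exact mul_le_mul (hC 1 r one_pos hr hr1.symm) (rpow_le_rpow hr.le hrR ha) (by positivity)
    (by positivity)

theorem integrableOn_one_mul_rpow (hK : IsRieszTypeKernel s d K) (hs : 0 < s) (ha : 0 ≤ a)
    (had : a + 1 < d) : IntegrableOn (fun r => K 1 r * r ^ a) (Ioi 0) := by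
  have hdecay : (fun r => K 1 r * r ^ a) =O[atTop] fun r => r ^ (a - d) := by
    refine (hK.isBigO_one.mul (Asymptotics.isBigO_refl (fun r => r ^ a) atTop)).congr' .rfl ?_
    filter_upwards [eventually_gt_atTop 0] with r hr
    rw [← rpow_add hr, neg_add_eq_sub]
  have hpow : IntegrableAtFilter (fun r : ℝ => r ^ (a - d)) atTop :=
    ⟨Ioi 1, Ioi_mem_atTop 1, integrableOn_Ioi_rpow_of_lt (by linarith) one_pos⟩
  have hmeas : StronglyMeasurableAtFilter (fun r => K 1 r * r ^ a) atTop :=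
    ((hK.measurable 1).mul (by fun_prop)).aestronglyMeasurable.stronglyMeasurableAtFilter
  obtain ⟨R, hR⟩ := integrableAtFilter_atTop_iff.1 (hdecay.integrableAtFilter hmeas hpow)
  refine ((hK.integrableOn_Ioc_one_mul_rpow hs ha R).union hR).mono_set fun r hr => ?_
  exact (le_total r R).imp (fun h => ⟨hr, h⟩) id

theorem mul_rpow_comp_mul (hK : IsRieszTypeKernel s d K) (a : ℝ) (hx : 0 < x) {r : ℝ}
    (hr : 0 < r) : K x (x * r) * (x * r) ^ a = x ^ (a + s - 1) * (K 1 r * r ^ a) := by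
  have hhom := hK.mul_mul hx one_pos hr
  rw [mul_one] at hhom
  rw [hhom, mul_rpow hx.le hr.le, add_sub_assoc, rpow_add hx]
  ring

theorem integrableOn_mul_rpow (hK : IsRieszTypeKernel s d K) (hs : 0 < s) (ha : 0 ≤ a)
    (had : a + 1 < d) (hx : 0 < x) : IntegrableOn (fun y => K x y * y ^ a) (Ioi 0) := by
  have hscale := (integrableOn_Ioi_comp_mul_left_iff (fun y => K x y * y ^ a) 0 hx).1
  rw [mul_zero] at hscale
  exact hscale (IntegrableOn.congr_fun ((hK.integrableOn_one_mul_rpow hs ha had).const_mul _)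
    (fun r hr => (hK.mul_rpow_comp_mul a hx hr).symm) measurableSet_Ioi)

theorem integral_mul_rpow (hK : IsRieszTypeKernel s d K) (a : ℝ) (hx : 0 < x) :
    ∫ y in Ioi (0 : ℝ), K x y * y ^ a = kernelMoment K a * x ^ (a + s) := by
  have hscale := integral_comp_mul_left_Ioi (fun y => K x y * y ^ a) 0 hx
  rw [mul_zero, smul_eq_mul, setIntegral_congr_fun measurableSet_Ioi
    (fun r hr => hK.mul_rpow_comp_mul a hx hr), integral_const_mul, eq_inv_mul_iff_mul_eq₀ hx.ne']
    at hscale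
  rw [← hscale, kernelMoment, rpow_sub_one hx.ne']
  field_simp

theorem integrableOn (hK : IsRieszTypeKernel s d K) (hs : 0 < s) (hd : 1 < d) (hx : 0 < x) :
    IntegrableOn (K x) (Ioi 0) := by
  simpa only [rpow_zero, mul_one] using
    hK.integrableOn_mul_rpow hs le_rfl (by linarith : 0 + 1 < d) hx

theorem integral_eq (hK : IsRieszTypeKernel s d K) (hx : 0 < x) :
    ∫ y in Ioi (0 : ℝ), K x y = kernelMoment K 0 * x ^ s := by
  simpa only [rpow_zero, mul_one, zero_add] using hK.integral_mul_rpow 0 hx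

end IsRieszTypeKernel

/-- The explicit form of `f ∈ C^α_+` with constant `N`, avoiding suprema: `N` bounds both the
Hölder quotients and the growth quotients of `f` on `(0,∞)`. -/
structure HolderPlusBound (α N : ℝ) (f : ℝ → ℝ) : Prop where
  abs_sub_le ⦃x y : ℝ⦄ : 0 < x → 0 < y → |f x - f y| ≤ N * |x - y| ^ α
  abs_le ⦃x : ℝ⦄ : 0 < x → |f x| ≤ N * x ^ α

theorem MemHolderPlus.holderPlusBound {α : ℝ} {f : ℝ → ℝ} (hf : MemHolderPlus α f)
    (hα : 0 < α) : HolderPlusBound α (holderPlusNorm α f) f := by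
  have hH : 0 ≤ sSup (holderRatioSet α f) := by
    refine Real.sSup_nonneg ?_
    rintro r ⟨x, y, -, -, -, rfl⟩
    positivity
  have hG : 0 ≤ sSup (growthRatioSet α f) := by
    refine Real.sSup_nonneg ?_
    rintro r ⟨x, hx, rfl⟩
    positivity
  constructor
  · intro x y hx hy
    rcases eq_or_ne x y with rfl | hxy
    · simp [zero_rpow hα.ne']
    · rw [← div_le_iff₀ (by positivity)]
      exact (le_csSup hf.2.1 ⟨x, y, hx, hy, hxy, rfl⟩).trans (le_add_of_nonneg_right hG)
  · intro x hx
    rw [← div_le_iff₀ (by positivity)]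
    exact (le_csSup hf.2.2 ⟨x, hx, rfl⟩).trans (le_add_of_nonneg_left hH)

namespace HolderPlusBound

variable {α N : ℝ} {f g : ℝ → ℝ}

theorem nonneg (hf : HolderPlusBound α N f) : 0 ≤ N := by
  simpa using (abs_nonneg _).trans (hf.abs_le one_pos)

theorem of_lt (hα : α ≠ 0)
    (hH : ∀ x₁ x₂, 0 < x₂ → x₂ < x₁ → |f x₁ - f x₂| ≤ N * (x₁ - x₂) ^ α)
    (hG : ∀ x, 0 < x → |f x| ≤ N * x ^ α) : HolderPlusBound α N f where
  abs_sub_le x y hx hy := by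
    rcases lt_trichotomy x y with h | rfl | h
    · rw [abs_sub_comm, abs_sub_comm x, abs_of_pos (sub_pos.2 h)]
      exact hH y x hx h
    · simp [zero_rpow hα]
    · rw [abs_of_pos (sub_pos.2 h)]
      exact hH x y hy h
  abs_le x hx := hG x hx

theorem const_mul (hf : HolderPlusBound α N f) (c : ℝ) :
    HolderPlusBound α (|c| * N) fun x => c * f x where
  abs_sub_le x y hx hy := by
    rw [← mul_sub, abs_mul, mul_assoc]
    exact mul_le_mul_of_nonneg_left (hf.abs_sub_le hx hy) (abs_nonneg c)
  abs_le x hx := by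
    rw [abs_mul, mul_assoc]
    exact mul_le_mul_of_nonneg_left (hf.abs_le hx) (abs_nonneg c)

theorem congr (hf : HolderPlusBound α N f) (h : EqOn f g (Ioi 0)) : HolderPlusBound α N g where
  abs_sub_le x y hx hy := by
    rw [← h hx, ← h hy]
    exact hf.abs_sub_le hx hy
  abs_le x hx := by
    rw [← h hx]
    exact hf.abs_le hx

theorem continuousOn (hf : HolderPlusBound α N f) (hα : 0 < α) : ContinuousOn f (Ioi 0) := by
  intro x hx
  have hlim : Tendsto (fun y => N * |y - x| ^ α) (𝓝[Ioi 0] x) (𝓝 0) := by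
    have hcont : Continuous fun y : ℝ => N * |y - x| ^ α := by fun_prop (disch := positivity)
    simpa [zero_rpow hα.ne'] using hcont.continuousWithinAt.tendsto (s := Ioi 0) (x := x)
  refine tendsto_iff_dist_tendsto_zero.2
    (squeeze_zero' (.of_forall fun _ => dist_nonneg) ?_ hlim)
  filter_upwards [self_mem_nhdsWithin] with y hy using hf.abs_sub_le hy hx

theorem aestronglyMeasurable (hf : HolderPlusBound α N f) (hα : 0 < α) :
    AEStronglyMeasurable f (volume.restrict (Ioi 0)) :=
  (hf.continuousOn hα).aestronglyMeasurable measurableSet_Ioi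

theorem le_of_mem_holderRatioSet (hf : HolderPlusBound α N f) {r : ℝ}
    (hr : r ∈ holderRatioSet α f) : r ≤ N := by
  obtain ⟨x, y, hx, hy, hxy, rfl⟩ := hr
  exact (div_le_iff₀ (by positivity)).2 (hf.abs_sub_le hx hy)

theorem le_of_mem_growthRatioSet (hf : HolderPlusBound α N f) {r : ℝ}
    (hr : r ∈ growthRatioSet α f) : r ≤ N := by
  obtain ⟨x, hx, rfl⟩ := hr
  exact (div_le_iff₀ (by positivity)).2 (hf.abs_le hx)

theorem memHolderPlus (hf : HolderPlusBound α N f) (hα : 0 < α) : MemHolderPlus α f :=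
  ⟨hf.continuousOn hα, ⟨N, fun _ => hf.le_of_mem_holderRatioSet⟩,
    ⟨N, fun _ => hf.le_of_mem_growthRatioSet⟩⟩

theorem holderPlusNorm_le (hf : HolderPlusBound α N f) : holderPlusNorm α f ≤ 2 * N := by
  rw [two_mul]
  exact add_le_add
    (csSup_le ⟨_, 2, 1, two_pos, one_pos, by norm_num, rfl⟩ fun _ => hf.le_of_mem_holderRatioSet)
    (csSup_le ⟨_, 1, one_pos, rfl⟩ fun _ => hf.le_of_mem_growthRatioSet)

end HolderPlusBound

section RpowDifference

theorem mul_rpow_sub_one_le_rpow {h x b : ℝ} (hh : 0 < h) (hx : h ≤ x) (hb : b ≤ 1) :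
    h * x ^ (b - 1) ≤ h ^ b := by
  calc h * x ^ (b - 1) ≤ h * h ^ (b - 1) := by
        have := rpow_le_rpow_of_nonpos hh hx (sub_nonpos.2 hb)
        gcongr
    _ = h ^ b := by rw [rpow_sub_one hh.ne', mul_div_cancel₀ _ hh.ne']

theorem abs_rpow_sub_rpow_le {x₁ x₂ s : ℝ} (hx₂ : 0 < x₂) (h : x₂ < x₁) (hs0 : 0 ≤ s)
    (hs1 : s ≤ 1) : |x₁ ^ s - x₂ ^ s| ≤ (x₁ - x₂) * x₁ ^ (s - 1) := by
  have hx₁ : 0 < x₁ := hx₂.trans h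
  have hratio : x₂ / x₁ ≤ (x₂ / x₁) ^ s :=
    self_le_rpow_of_le_one (by positivity) ((div_le_one hx₁).2 h.le) hs1
  rw [div_rpow hx₂.le hx₁.le, le_div_iff₀ (by positivity)] at hratio
  calc |x₁ ^ s - x₂ ^ s| = x₁ ^ s - x₂ ^ s :=
        abs_of_nonneg (sub_nonneg.2 (rpow_le_rpow hx₂.le h.le hs0))
    _ ≤ x₁ ^ s - x₂ / x₁ * x₁ ^ s := by linarith
    _ = (x₁ - x₂) * x₁ ^ (s - 1) := by
        rw [rpow_sub_one hx₁.ne']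
        field_simp

end RpowDifference

namespace IsRieszTypeKernel

variable {s d α N x x₁ x₂ : ℝ} {K : ℝ → ℝ → ℝ} {f : ℝ → ℝ}

theorem integrableOn_mul (hK : IsRieszTypeKernel s d K) (hs : 0 < s) (hα : 0 < α)
    (hαd : α + 1 < d) (hf : HolderPlusBound α N f) (hx : 0 < x) :
    IntegrableOn (fun y => K x y * f y) (Ioi 0) := by
  refine ((hK.integrableOn_mul_rpow hs hα.le hαd hx).const_mul N).mono'
    ((hK.measurable x).aestronglyMeasurable.mul (hf.aestronglyMeasurable hα)) ?_
  refine ae_restrict_of_forall_mem measurableSet_Ioi fun y hy => ?_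
  rw [norm_mul, norm_of_nonneg (hK.nonneg hx hy), mul_left_comm]
  exact mul_le_mul_of_nonneg_left (hf.abs_le hy) (hK.nonneg hx hy)

theorem abs_integral_mul_le (hK : IsRieszTypeKernel s d K) (hs : 0 < s) (hα : 0 ≤ α)
    (hαd : α + 1 < d) (hf : HolderPlusBound α N f) (hx : 0 < x) :
    |∫ y in Ioi (0 : ℝ), K x y * f y| ≤ kernelMoment K α * N * x ^ (α + s) := by
  rw [mul_right_comm, ← hK.integral_mul_rpow α hx, ← integral_mul_const]
  refine norm_integral_le_of_norm_le (f := fun y => K x y * f y)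
    ((hK.integrableOn_mul_rpow hs hα hαd hx).mul_const N) ?_
  refine ae_restrict_of_forall_mem measurableSet_Ioi fun y hy => ?_
  rw [norm_mul, norm_of_nonneg (hK.nonneg hx hy), mul_assoc, mul_comm _ N]
  exact mul_le_mul_of_nonneg_left (hf.abs_le hy) (hK.nonneg hx hy)

theorem integrableOn_sub_mul_sub (hK : IsRieszTypeKernel s d K) (hs : 0 < s) (hα : 0 < α)
    (hαd : α + 1 < d) (hf : HolderPlusBound α N f) (hx₁ : 0 < x₁) (hx₂ : 0 < x₂) (c : ℝ) :
    IntegrableOn (fun y => (K x₁ y - K x₂ y) * (f y - c)) (Ioi 0) := by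
  have hd : 1 < d := by linarith
  have hprod : IntegrableOn (fun y => K x₁ y * f y - K x₂ y * f y) (Ioi 0) :=
    (hK.integrableOn_mul hs hα hαd hf hx₁).fun_sub (hK.integrableOn_mul hs hα hαd hf hx₂)
  have hker : IntegrableOn (fun y => K x₁ y - K x₂ y) (Ioi 0) :=
    (hK.integrableOn hs hd hx₁).fun_sub (hK.integrableOn hs hd hx₂)
  refine IntegrableOn.congr_fun (hprod.fun_sub (hker.mul_const c)) (fun y _ => ?_)
    measurableSet_Ioi
  ring

theorem integral_mul_sub_integral_mul (hK : IsRieszTypeKernel s d K) (hs : 0 < s) (hα : 0 < α)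
    (hαd : α + 1 < d) (hf : HolderPlusBound α N f) (hx₁ : 0 < x₁) (hx₂ : 0 < x₂) (c : ℝ) :
    (∫ y in Ioi (0 : ℝ), K x₁ y * f y) - ∫ y in Ioi (0 : ℝ), K x₂ y * f y =
      (∫ y in Ioi (0 : ℝ), (K x₁ y - K x₂ y) * (f y - c)) +
        kernelMoment K 0 * (x₁ ^ s - x₂ ^ s) * c := by
  have hd : 1 < d := by linarith
  have hi₁ := hK.integrableOn hs hd hx₁
  have hi₂ := hK.integrableOn hs hd hx₂
  rw [mul_sub, ← hK.integral_eq hx₁, ← hK.integral_eq hx₂, ← integral_sub hi₁ hi₂,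
    ← integral_mul_const,
    ← integral_add (hK.integrableOn_sub_mul_sub hs hα hαd hf hx₁ hx₂ c)
      ((hi₁.fun_sub hi₂).mul_const c),
    ← integral_sub (hK.integrableOn_mul hs hα hαd hf hx₁) (hK.integrableOn_mul hs hα hαd hf hx₂)]
  congr 1 with y
  ring

theorem exists_abs_sub_le_add_rpow (hK : IsRieszTypeKernel s d K) :
    ∃ C, 0 ≤ C ∧ ∀ x₁ x₂ y, 0 < x₁ → 0 < x₂ → 0 < y → x₁ ≠ y → x₂ ≠ y →
      |K x₁ y - K x₂ y| ≤ C * (|x₁ - y| ^ (s - 1) + |x₂ - y| ^ (s - 1)) := by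
  obtain ⟨C, hC0, hC⟩ := hK.exists_le
  refine ⟨C, hC0, fun x₁ x₂ y hx₁ hx₂ hy h₁ h₂ => ?_⟩
  refine abs_sub_le_of_nonneg_of_le (hK.nonneg hx₁ hy) ((hC x₁ y hx₁ hy h₁).trans ?_)
    (hK.nonneg hx₂ hy) ((hC x₂ y hx₂ hy h₂).trans ?_)
  · gcongr
    exact le_add_of_nonneg_right (by positivity)
  · gcongr
    exact le_add_of_nonneg_left (by positivity)

theorem exists_abs_setIntegral_near_le (hK : IsRieszTypeKernel s d K) (hs : 0 < s) (hα : 0 ≤ α) :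
    ∃ C, ∀ (f : ℝ → ℝ) (N x₁ x₂ : ℝ), HolderPlusBound α N f → 0 < x₂ → x₂ < x₁ →
      |∫ y in Ioi 0 ∩ ball x₁ (2 * (x₁ - x₂)), (K x₁ y - K x₂ y) * (f y - f x₁)| ≤
        C * N * (x₁ - x₂) ^ (α + s) := by
  obtain ⟨C, hC0, hC⟩ := hK.exists_abs_sub_le_add_rpow
  refine ⟨C * 2 ^ α * (2 * (2 / s * 3 ^ s)), fun f N x₁ x₂ hf hx₂ h12 => ?_⟩
  have hx₁ : 0 < x₁ := hx₂.trans h12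
  have hN := hf.nonneg
  set h := x₁ - x₂
  have hh0 : 0 < h := sub_pos.2 h12
  set S := Ioi 0 ∩ ball x₁ (2 * h)
  have hS₁ : S ⊆ ball x₁ (3 * h) := inter_subset_right.trans (ball_subset_ball (by linarith))
  have hS₂ : S ⊆ ball x₂ (3 * h) := inter_subset_right.trans
    (ball_subset_ball' (by rw [Real.dist_eq, abs_of_pos hh0]; linarith))
  have hpow : ∀ {x}, S ⊆ ball x (3 * h) → IntegrableOn (fun y => |x - y| ^ (s - 1)) S :=
    fun hS => (integrableOn_ball_abs_sub_rpow (by linarith) (by positivity) _).mono_set hS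
  have hpointwise : ∀ᵐ y ∂volume.restrict S, ‖(K x₁ y - K x₂ y) * (f y - f x₁)‖ ≤
      C * N * (2 * h) ^ α * (|x₁ - y| ^ (s - 1) + |x₂ - y| ^ (s - 1)) := by
    filter_upwards [ae_restrict_of_ae (Measure.ae_ne volume x₁),
      ae_restrict_of_ae (Measure.ae_ne volume x₂),
      ae_restrict_mem (measurableSet_Ioi.inter measurableSet_ball)] with y hy₁ hy₂ ⟨hy, hball⟩
    rw [mem_ball, Real.dist_eq] at hball
    have hdiff := hC x₁ x₂ y hx₁ hx₂ hy hy₁.symm hy₂.symm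
    have hosc : |f y - f x₁| ≤ N * (2 * h) ^ α := (hf.abs_sub_le hy hx₁).trans (by gcongr)
    rw [norm_mul]
    exact (mul_le_mul hdiff hosc (abs_nonneg _) (by positivity)).trans_eq (by ring)
  calc |∫ y in S, (K x₁ y - K x₂ y) * (f y - f x₁)|
      ≤ ∫ y in S, C * N * (2 * h) ^ α * (|x₁ - y| ^ (s - 1) + |x₂ - y| ^ (s - 1)) :=
        norm_integral_le_of_norm_le (((hpow hS₁).fun_add (hpow hS₂)).const_mul _) hpointwise
    _ ≤ C * N * (2 * h) ^ α * (2 / s * (3 * h) ^ s + 2 / s * (3 * h) ^ s) := by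
        rw [integral_const_mul, integral_add (hpow hS₁) (hpow hS₂)]
        gcongr <;> exact setIntegral_abs_sub_rpow_le hs (by positivity) ‹_›
    _ = C * 2 ^ α * (2 * (2 / s * 3 ^ s)) * N * h ^ (α + s) := by
        rw [mul_rpow zero_le_two hh0.le, mul_rpow zero_le_three hh0.le, rpow_add hh0]
        ring

/-- The majorant of `(K x₁ y - K x₂ y) * (f y - f x₁) / (x₁ - x₂)` for `f ∈ C^α_+`, `x = x₁`
and `y` far from `x₁`: it combines the growth of `f` for the first summand in the smoothness
condition on `K` with the Hölder continuity of `f` for the second one. -/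
def farMajorant (s α : ℝ) (K : ℝ → ℝ → ℝ) (x y : ℝ) : ℝ :=
  x⁻¹ * (K x y * y ^ α + x ^ α * K x y) + |x - y| ^ (α + s - 2)

theorem exists_abs_sub_mul_sub_far_le (hK : IsRieszTypeKernel s d K) (α : ℝ) :
    ∃ C, 0 ≤ C ∧ ∀ (f : ℝ → ℝ) (N x₁ x₂ y : ℝ), HolderPlusBound α N f → 0 < x₂ → x₂ < x₁ →
      x₁ < 2 * x₂ → 0 < y → 2 * (x₁ - x₂) ≤ |x₁ - y| →
        |(K x₁ y - K x₂ y) * (f y - f x₁)| ≤ C * N * (x₁ - x₂) * farMajorant s α K x₁ y := by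
  obtain ⟨C, hC0, hC⟩ := hK.exists_abs_sub_le
  refine ⟨C, hC0, fun f N x₁ x₂ y hf hx₂ h12 h21 hy hfar => ?_⟩
  have hx₁ : 0 < x₁ := hx₂.trans h12
  have hdist : 0 < |x₁ - y| := by linarith
  have hKn := hK.nonneg hx₁ hy
  have hgrowth : |f y - f x₁| ≤ N * (y ^ α + x₁ ^ α) := by
    linarith [abs_sub (f y) (f x₁), hf.abs_le hy, hf.abs_le hx₁]
  have hosc : |f y - f x₁| ≤ N * |x₁ - y| ^ α := abs_sub_comm x₁ y ▸ hf.abs_sub_le hy hx₁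
  calc |(K x₁ y - K x₂ y) * (f y - f x₁)|
      ≤ C * (x₁ - x₂) * (K x₁ y / x₁ + |x₁ - y| ^ (s - 2)) * |f y - f x₁| := by
        rw [abs_mul]
        gcongr
        exact hC x₁ x₂ y hx₂ h12 h21 hy hfar
    _ = C * (x₁ - x₂) * (K x₁ y / x₁ * |f y - f x₁| + |x₁ - y| ^ (s - 2) * |f y - f x₁|) := by
        ring
    _ ≤ C * (x₁ - x₂) * (K x₁ y / x₁ * (N * (y ^ α + x₁ ^ α)) +
          |x₁ - y| ^ (s - 2) * (N * |x₁ - y| ^ α)) := by gcongr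
    _ = C * N * (x₁ - x₂) * farMajorant s α K x₁ y := by
        rw [farMajorant, add_sub_assoc, rpow_add hdist]
        ring

theorem integrableOn_mul_rpow_add_mul (hK : IsRieszTypeKernel s d K) (hs : 0 < s) (hα : 0 ≤ α)
    (hαd : α + 1 < d) (hx : 0 < x) :
    IntegrableOn (fun y => x⁻¹ * (K x y * y ^ α + x ^ α * K x y)) (Ioi 0) :=
  ((hK.integrableOn_mul_rpow hs hα hαd hx).fun_add
    ((hK.integrableOn hs (by linarith) hx).const_mul _)).const_mul _

theorem integral_mul_rpow_add_mul (hK : IsRieszTypeKernel s d K) (hs : 0 < s) (hα : 0 ≤ α)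
    (hαd : α + 1 < d) (hx : 0 < x) :
    ∫ y in Ioi (0 : ℝ), x⁻¹ * (K x y * y ^ α + x ^ α * K x y) =
      (kernelMoment K α + kernelMoment K 0) * x ^ (α + s - 1) := by
  rw [integral_const_mul, integral_add (hK.integrableOn_mul_rpow hs hα hαd hx)
    ((hK.integrableOn hs (by linarith) hx).const_mul _), integral_const_mul,
    hK.integral_mul_rpow α hx, hK.integral_eq hx, rpow_sub_one hx.ne', rpow_add hx]
  field_simp

theorem integrableOn_farMajorant (hK : IsRieszTypeKernel s d K) (hs : 0 < s) (hα : 0 ≤ α)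
    (hαs : α + s < 1) (hαd : α + 1 < d) (hx : 0 < x) {r : ℝ} (hr : 0 < r) :
    IntegrableOn (farMajorant s α K x) (Ioi 0 \ ball x r) :=
  ((hK.integrableOn_mul_rpow_add_mul hs hα hαd hx).mono_set sdiff_subset).fun_add
    ((integrableOn_compl_ball_abs_sub_rpow (by linarith) hr x).mono_set (sdiff_subset_compl _ _))

theorem setIntegral_farMajorant_le (hK : IsRieszTypeKernel s d K) (hs : 0 < s) (hα : 0 ≤ α)
    (hαs : α + s < 1) (hαd : α + 1 < d) (hx : 0 < x) {r : ℝ} (hr : 0 < r) :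
    ∫ y in Ioi 0 \ ball x r, farMajorant s α K x y ≤
      (kernelMoment K α + kernelMoment K 0) * x ^ (α + s - 1) +
        2 / (1 - (α + s)) * r ^ (α + s - 1) := by
  have hfar := integral_compl_ball_abs_sub_rpow (by linarith : α + s - 2 < -1) hr x
  rw [show α + s - 2 + 1 = α + s - 1 by ring, neg_sub] at hfar
  have hiK := hK.integrableOn_mul_rpow_add_mul hs hα hαd hx
  have hiR := integrableOn_compl_ball_abs_sub_rpow (by linarith : α + s - 2 < -1) hr x
  simp only [farMajorant]
  rw [integral_add (hiK.mono_set sdiff_subset) (hiR.mono_set (sdiff_subset_compl _ _)),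
    ← hK.integral_mul_rpow_add_mul hs hα hαd hx, ← hfar]
  refine add_le_add
    (setIntegral_mono_set hiK (ae_restrict_of_forall_mem measurableSet_Ioi fun y (hy : 0 < y) => ?_)
      sdiff_subset.eventuallyLE)
    (setIntegral_mono_set hiR (.of_forall fun y => by positivity)
      (sdiff_subset_compl _ _).eventuallyLE)
  have := hK.nonneg hx hy
  positivity

theorem exists_abs_setIntegral_far_le (hK : IsRieszTypeKernel s d K) (hs : 0 < s) (hα : 0 ≤ α)
    (hαs : α + s < 1) (hαd : α + 1 < d) :
    ∃ C, ∀ (f : ℝ → ℝ) (N x₁ x₂ : ℝ), HolderPlusBound α N f → 0 < x₂ → x₂ < x₁ →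
      x₁ < 2 * x₂ →
        |∫ y in Ioi 0 \ ball x₁ (2 * (x₁ - x₂)), (K x₁ y - K x₂ y) * (f y - f x₁)| ≤
          C * N * (x₁ - x₂) ^ (α + s) := by
  obtain ⟨C, hC0, hC⟩ := hK.exists_abs_sub_mul_sub_far_le α
  set M := kernelMoment K α + kernelMoment K 0
  set R := 2 / (1 - (α + s))
  have hM : 0 ≤ M := add_nonneg (hK.kernelMoment_nonneg α) (hK.kernelMoment_nonneg 0)
  refine ⟨C * (M + R), fun f N x₁ x₂ hf hx₂ h12 h21 => ?_⟩
  have hx₁ : 0 < x₁ := hx₂.trans h12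
  have hN := hf.nonneg
  have hh : 0 < x₁ - x₂ := sub_pos.2 h12
  have hr : 0 < 2 * (x₁ - x₂) := by positivity
  calc |∫ y in Ioi 0 \ ball x₁ (2 * (x₁ - x₂)), (K x₁ y - K x₂ y) * (f y - f x₁)|
      ≤ ∫ y in Ioi 0 \ ball x₁ (2 * (x₁ - x₂)), C * N * (x₁ - x₂) * farMajorant s α K x₁ y := by
        refine norm_integral_le_of_norm_le (f := fun y => (K x₁ y - K x₂ y) * (f y - f x₁))
          ((hK.integrableOn_farMajorant hs hα hαs hαd hx₁ hr).const_mul _)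
          (ae_restrict_of_forall_mem (measurableSet_Ioi.diff measurableSet_ball)
            fun y ⟨hy, hball⟩ => hC f N x₁ x₂ y hf hx₂ h12 h21 hy ?_)
        rwa [mem_ball', Real.dist_eq, not_lt] at hball
    _ ≤ C * N * (x₁ - x₂) *
          (M * x₁ ^ (α + s - 1) + R * (2 * (x₁ - x₂)) ^ (α + s - 1)) := by
        rw [integral_const_mul]
        gcongr
        exact hK.setIntegral_farMajorant_le hs hα hαs hαd hx₁ hr
    _ = C * N * (M * ((x₁ - x₂) * x₁ ^ (α + s - 1)) +
          R * ((x₁ - x₂) * (2 * (x₁ - x₂)) ^ (α + s - 1))) := by ring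
    _ ≤ C * N * (M * (x₁ - x₂) ^ (α + s) + R * (x₁ - x₂) ^ (α + s)) := by
        gcongr <;> exact mul_rpow_sub_one_le_rpow hh (by linarith) hαs.le
    _ = C * (M + R) * N * (x₁ - x₂) ^ (α + s) := by ring

theorem abs_integral_mul_sub_le_of_two_mul_le (hK : IsRieszTypeKernel s d K) (hs : 0 < s)
    (hα : 0 ≤ α) (hαd : α + 1 < d) (hf : HolderPlusBound α N f) (hx₂ : 0 < x₂)
    (h12 : 2 * x₂ ≤ x₁) :
    |(∫ y in Ioi (0 : ℝ), K x₁ y * f y) - ∫ y in Ioi (0 : ℝ), K x₂ y * f y| ≤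
      2 * kernelMoment K α * 2 ^ (α + s) * N * (x₁ - x₂) ^ (α + s) := by
  have hM := hK.kernelMoment_nonneg α
  have hN := hf.nonneg
  have hx₁ : 0 < x₁ := by linarith
  have hgrowth : ∀ x, 0 < x → x ≤ 2 * (x₁ - x₂) → |∫ y in Ioi (0 : ℝ), K x y * f y| ≤
      kernelMoment K α * N * (2 * (x₁ - x₂)) ^ (α + s) := fun x hx hle =>
    (hK.abs_integral_mul_le hs hα hαd hf hx).trans (by gcongr)
  calc |(∫ y in Ioi (0 : ℝ), K x₁ y * f y) - ∫ y in Ioi (0 : ℝ), K x₂ y * f y|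
      ≤ |∫ y in Ioi (0 : ℝ), K x₁ y * f y| + |∫ y in Ioi (0 : ℝ), K x₂ y * f y| := abs_sub _ _
    _ ≤ kernelMoment K α * N * (2 * (x₁ - x₂)) ^ (α + s) +
          kernelMoment K α * N * (2 * (x₁ - x₂)) ^ (α + s) :=
        add_le_add (hgrowth x₁ hx₁ (by linarith)) (hgrowth x₂ hx₂ (by linarith))
    _ = 2 * kernelMoment K α * 2 ^ (α + s) * N * (x₁ - x₂) ^ (α + s) := by
        rw [mul_rpow zero_le_two (by linarith)]
        ring

theorem abs_kernelMoment_mul_rpow_sub_mul_le (hK : IsRieszTypeKernel s d K) (hs : 0 ≤ s)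
    (hs1 : s ≤ 1) (hαs : α + s ≤ 1) (hf : HolderPlusBound α N f) (hx₂ : 0 < x₂) (h12 : x₂ < x₁) :
    |kernelMoment K 0 * (x₁ ^ s - x₂ ^ s) * f x₁| ≤
      kernelMoment K 0 * N * (x₁ - x₂) ^ (α + s) := by
  have hM := hK.kernelMoment_nonneg 0
  have hN := hf.nonneg
  have hx₁ : 0 < x₁ := hx₂.trans h12
  have hh : 0 < x₁ - x₂ := sub_pos.2 h12
  calc |kernelMoment K 0 * (x₁ ^ s - x₂ ^ s) * f x₁|
      = kernelMoment K 0 * |x₁ ^ s - x₂ ^ s| * |f x₁| := by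
        rw [abs_mul, abs_mul, abs_of_nonneg hM]
    _ ≤ kernelMoment K 0 * ((x₁ - x₂) * x₁ ^ (s - 1)) * (N * x₁ ^ α) := by
        gcongr
        · exact abs_rpow_sub_rpow_le hx₂ h12 hs hs1
        · exact hf.abs_le hx₁
    _ = kernelMoment K 0 * N * ((x₁ - x₂) * x₁ ^ (α + s - 1)) := by
        rw [add_sub_assoc, rpow_add hx₁]
        ring
    _ ≤ kernelMoment K 0 * N * (x₁ - x₂) ^ (α + s) := by
        gcongr
        exact mul_rpow_sub_one_le_rpow hh (by linarith) hαs

theorem exists_abs_integral_mul_sub_le_of_lt_two_mul (hK : IsRieszTypeKernel s d K) (hs : 0 < s)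
    (hα : 0 < α) (hαs : α + s < 1) (hαd : α + 1 < d) :
    ∃ C, ∀ (f : ℝ → ℝ) (N x₁ x₂ : ℝ), HolderPlusBound α N f → 0 < x₂ → x₂ < x₁ →
      x₁ < 2 * x₂ →
        |(∫ y in Ioi (0 : ℝ), K x₁ y * f y) - ∫ y in Ioi (0 : ℝ), K x₂ y * f y| ≤
          C * N * (x₁ - x₂) ^ (α + s) := by
  obtain ⟨A, hA⟩ := hK.exists_abs_setIntegral_near_le hs hα.le
  obtain ⟨B, hB⟩ := hK.exists_abs_setIntegral_far_le hs hα.le hαs hαd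
  refine ⟨A + B + kernelMoment K 0, fun f N x₁ x₂ hf hx₂ h12 h21 => ?_⟩
  have hx₁ : 0 < x₁ := hx₂.trans h12
  have hnear := hA f N x₁ x₂ hf hx₂ h12
  have hfar := hB f N x₁ x₂ hf hx₂ h12 h21
  have hmoment := hK.abs_kernelMoment_mul_rpow_sub_mul_le hs.le (by linarith) hαs.le hf hx₂ h12
  rw [hK.integral_mul_sub_integral_mul hs hα hαd hf hx₁ hx₂ (f x₁),
    ← integral_inter_add_sdiff measurableSet_ball
      (hK.integrableOn_sub_mul_sub hs hα hαd hf hx₁ hx₂ (f x₁))]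
  calc _ ≤ A * N * (x₁ - x₂) ^ (α + s) + B * N * (x₁ - x₂) ^ (α + s) +
          kernelMoment K 0 * N * (x₁ - x₂) ^ (α + s) :=
        (abs_add_three _ _ _).trans (by gcongr)
    _ = (A + B + kernelMoment K 0) * N * (x₁ - x₂) ^ (α + s) := by ring

theorem exists_holderPlusBound_integral_mul (hK : IsRieszTypeKernel s d K) (hs : 0 < s)
    (hα : 0 < α) (hαs : α + s < 1) (hαd : α + 1 < d) :
    ∃ C, ∀ (f : ℝ → ℝ) (N : ℝ), HolderPlusBound α N f →
      HolderPlusBound (α + s) (C * N) fun x => ∫ y in Ioi (0 : ℝ), K x y * f y := by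
  obtain ⟨C, hC⟩ := hK.exists_abs_integral_mul_sub_le_of_lt_two_mul hs hα hαs hαd
  set M := kernelMoment K α
  refine ⟨max C (max (2 * M * 2 ^ (α + s)) M), fun f N hf => ?_⟩
  have hN := hf.nonneg
  refine .of_lt (by positivity) (fun x₁ x₂ hx₂ h12 => ?_) fun x hx => ?_
  · rcases lt_or_ge x₁ (2 * x₂) with h21 | h21
    · refine (hC f N x₁ x₂ hf hx₂ h12 h21).trans ?_
      gcongr
      exact le_max_left _ _
    · refine (hK.abs_integral_mul_sub_le_of_two_mul_le hs hα.le hαd hf hx₂ h21).trans ?_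
      gcongr
      exact (le_max_left _ _).trans (le_max_right _ _)
  · refine (hK.abs_integral_mul_le hs hα.le hαd hf hx).trans ?_
    gcongr
    exact (le_max_right _ _).trans (le_max_right _ _)

end IsRieszTypeKernel

theorem HolderPlusBound.integrableOn_besselRieszKernel_mul {lam s α N x : ℝ} {f : ℝ → ℝ}
    (hf : HolderPlusBound α N f) (hlam : 0 < lam) (hs : 0 < s) (hα : 0 < α) (hs1 : s < 1)
    (hsum : α + s < lam) (hx : 0 < x) :
    IntegrableOn (fun y => besselRieszKernel lam s x y * f y) (Ioi 0) :=
  (isRieszTypeKernel_besselRieszKernel hlam hs1).integrableOn_mul hs hα (by linarith) hf hx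

theorem exists_holderPlusBound_integral_poissonSemigroup {lam s α : ℝ} (hlam : 0 < lam)
    (hs : 0 < s) (hα : 0 < α) (hsum_lam : α + s < lam) (hsum_one : α + s < 1) :
    ∃ C, ∀ (f : ℝ → ℝ) (N : ℝ), HolderPlusBound α N f →
      HolderPlusBound (α + s) (C * N) fun x =>
        ∫ t in Ioi (0 : ℝ), poissonSemigroup lam f t x * t ^ (s - 1) := by
  have hs1 : s < 1 := by linarith
  have hK := isRieszTypeKernel_besselRieszKernel hlam hs1
  obtain ⟨C, hC⟩ := hK.exists_holderPlusBound_integral_mul hs hα hsum_one (by linarith)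
  set κ := 2 * Gamma (lam + 1) / (√π * Gamma (lam + 1 / 2)) *
    ∫ r in Ioi (0 : ℝ), r ^ s * (1 + r ^ 2) ^ (-(lam + 1))
  refine ⟨|κ| * C, fun f N hf => ?_⟩
  rw [mul_assoc]
  refine ((hC f N hf).const_mul κ).congr fun x hx => ?_
  exact (integral_poissonSemigroup_mul_rpow hlam (by linarith) (by linarith) hx
    (hf.aestronglyMeasurable hα)
    (hf.integrableOn_besselRieszKernel_mul hlam hs hα hs1 hsum_lam hx)).2.symm

/-- Schauder estimate for the negative power `Δ_λ^{-σ}` (Theorem A(a)). -/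
theorem schauder_estimate_negative_power
    (lam σ α : ℝ) (hlam : 0 < lam) (hσ0 : 0 < σ) (hσ1 : σ < 1)
    (hα0 : 0 < α) (hα1 : α < 1) (hsum : α + 2 * σ < min lam 1) :
    ∃ C : ℝ, 0 < C ∧ ∀ f : ℝ → ℝ, MemHolderPlus α f →
      (∀ t : ℝ, 0 < t → ∀ x : ℝ, 0 < x →
        IntegrableOn (fun y => besselPoissonKernel lam t x y * f y) (Set.Ioi 0)) ∧
      (∀ x : ℝ, 0 < x →
        IntegrableOn (fun t => poissonSemigroup lam f t x * t ^ (2 * σ - 1)) (Set.Ioi 0)) ∧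
      MemHolderPlus (α + 2 * σ)
        (fun x => 1 / Real.Gamma (2 * σ) *
          ∫ t in Set.Ioi (0 : ℝ), poissonSemigroup lam f t x * t ^ (2 * σ - 1)) ∧
      holderPlusNorm (α + 2 * σ)
          (fun x => 1 / Real.Gamma (2 * σ) *
            ∫ t in Set.Ioi (0 : ℝ), poissonSemigroup lam f t x * t ^ (2 * σ - 1)) ≤
        C * holderPlusNorm α f := by
  obtain ⟨hsum_lam, hsum_one⟩ := lt_min_iff.1 hsum
  have hs : 0 < 2 * σ := by positivity
  obtain ⟨C, hC⟩ := exists_holderPlusBound_integral_poissonSemigroup hlam hs hα0 hsum_lam hsum_one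
  set k := 1 / Gamma (2 * σ)
  refine ⟨max (2 * (|k| * C)) 1, by positivity, fun f hf => ?_⟩
  have hfN := hf.holderPlusBound hα0
  have hmeas := hfN.aestronglyMeasurable hα0
  have hKf : ∀ x, 0 < x → IntegrableOn (fun y => besselRieszKernel lam (2 * σ) x y * f y) (Ioi 0) :=
    fun x hx => hfN.integrableOn_besselRieszKernel_mul hlam hs hα0 (by linarith) hsum_lam hx
  have hu := (hC f _ hfN).const_mul k
  refine ⟨fun t ht x hx => ?_, fun x hx => ?_, hu.memHolderPlus (by positivity),
    hu.holderPlusNorm_le.trans ?_⟩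
  · exact integrableOn_besselPoissonKernel_mul hlam (by linarith) (by linarith) hx hmeas
      (hKf x hx) ht
  · exact (integral_poissonSemigroup_mul_rpow hlam (by linarith) (by linarith) hx hmeas
      (hKf x hx)).1
  · calc 2 * (|k| * (C * holderPlusNorm α f)) = 2 * (|k| * C) * holderPlusNorm α f := by ring
      _ ≤ max (2 * (|k| * C)) 1 * holderPlusNorm α f :=
        mul_le_mul_of_nonneg_right (le_max_left _ _) hfN.nonneg
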